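/- arXiv:1805.11323 — 3 statements merged into one kernel-verified Lean document; each statement's English description precedes it below -/
import Mathlib

section
/- Assume in addition μ ∉ {0, 1}. For all n, m ≥ 0 and generic tuples ū (length n), v̄ (length m), the modified scalar product has the modified Izergin–Korepin form ⟨0|( ν_{21}(ū) ν_{12}(v̄) |0⟩ ) = μ^{2n}(1−μ)^{m−n} Σ (−β_1)^{n_2−m_2}(−β_2)^{n_1−m_1} λ_2(ū_I)·λ_2(v̄_II)·λ_1(ū_II)·λ_1(v̄_I)·f(ū_I, ū_II)·f(v̄_II, v̄_I)·K^{(1/μ)}_{m_2,n_2}(v̄_II | ū_II)·\bar{K}^{(1/μ)}_{m_1,n_1}(v̄_I | ū_I), where the sum runs over all pairs of partitions ū ⇒ {ū_I, ū_II} and v̄ ⇒ {v̄_I, v̄_II}, with n_1 = #ū_I, n_2 = #ū_II, m_1 = #v̄_I, m_2 = #v̄_II. -/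
open scoped BigOperators

noncomputable section

/-- The rational function `g(u,v) = c/(u-v)`. -/
def gC (c u v : ℂ) : ℂ := c / (u - v)

/-- The rational function `f(u,v) = (u-v+c)/(u-v)`. -/
def fC (c u v : ℂ) : ℂ := (u - v + c) / (u - v)

/-- The rational function `h(u,v) = (u-v+c)/c`. -/
def hC (c u v : ℂ) : ℂ := (u - v + c) / c

/-- A family of parameters is generic if all pairwise differences avoid `0, ±c, ±2c`. -/
def Generic (c : ℂ) {ι : Type*} (w : ι → ℂ) : Prop :=
  ∀ i j, i ≠ j → w i - w j ≠ 0 ∧ w i - w j ≠ c ∧ w i - w j ≠ -c ∧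
    w i - w j ≠ 2 * c ∧ w i - w j ≠ -2 * c

/-- The modified Izergin determinant `K^{(z)}(x̄|ȳ)`. -/
def KIz (c z : ℂ) {ι κ : Type*} [Fintype ι] [Fintype κ] [DecidableEq κ]
    (x : ι → ℂ) (y : κ → ℂ) : ℂ :=
  Matrix.det (Matrix.of fun j k : κ =>
    -z * (if j = k then 1 else 0) +
      (∏ i, fC c (x i) (y j)) * (∏ i ∈ Finset.univ.erase j, fC c (y j) (y i))
        / hC c (y j) (y k))

/-- The conjugated modified Izergin determinant: `c` is replaced by `-c`. -/
def KIzBar (c z : ℂ) {ι κ : Type*} [Fintype ι] [Fintype κ] [DecidableEq κ]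
    (x : ι → ℂ) (y : κ → ℂ) : ℂ :=
  KIz (-c) z x y

/-- Restriction of a tuple to a subtuple indexed by a `Finset`. -/
def restr {p : ℕ} (w : Fin p → ℂ) (s : Finset (Fin p)) : {x // x ∈ s} → ℂ :=
  fun i => w i.1

/-- Double product `f(w̄_s, w̄_t)` over two subtuples of a tuple. -/
def fSS (c : ℂ) {p : ℕ} (w : Fin p → ℂ) (s t : Finset (Fin p)) : ℂ :=
  ∏ i ∈ s, ∏ j ∈ t, fC c (w i) (w j)

/-- Ordered product of operators over a subtuple (the operators pairwise commute,
so the order is irrelevant). -/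
def opProd {V : Type*} [AddCommGroup V] [Module ℂ V] {p : ℕ}
    (op : ℂ → Module.End ℂ V) (w : Fin p → ℂ) (s : Finset (Fin p)) : Module.End ℂ V :=
  ((s.sort (· ≤ ·)).map (fun i => op (w i))).prod

/-- The index subsets of a partition of `Fin p` into three parts. -/
def parts {p : ℕ} (σ : Fin p → Fin 3) (k : Fin 3) : Finset (Fin p) :=
  Finset.univ.filter (fun i => σ i = k)

/-!
Multiplying the monodromy matrix on both sides by unitriangular matrices turns the modified vacuum
into a highest weight vector and leaves the commutation relations and `ν₁₂` unchanged. The usual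
Bethe ansatz therefore applies. Undoing the twist, `ν₂₁(x)` acts on `ν₁₂(W)|0⟩` as
`β₁ β₂ (1 + L₂ / β₁) (1 + L₁ / β₂)`, where `Lᵢ` is the action of a diagonal entry: it adds `x` to
`W` and then removes one parameter. This determines the scalar product recursively from the vacuum
averages.

The Izergin–Korepin sum satisfies the same recursion. Expanded over principal minors,
`K^{(z)}(X|Y) = ∑_{S ⊆ Y} (-z)^{#(Y \ S)} f(S, Y \ S) f(X, S)`. The operators act on each
`f(X, S)` by partial fractions, and for `z = 1 / μ` the terms that remain combine into
`K^{(z)}(X|Y ∪ {x})`, or into `f(x, Y) K^{(z)}(X|Y)` when `x` is one of the arguments on the left.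
-/

namespace ModifiedBethe

open Finset

/-! ### The rational functions and their double products -/

section RationalFunctions

variable {c a b s t x y : ℂ} {W W' X X' Y Y' : Finset ℂ}

lemma gC_neg (c u v : ℂ) : gC (-c) u v = gC c v u := by
  rw [gC, gC, ← neg_sub v u, neg_div_neg_eq]

lemma fC_neg (c u v : ℂ) : fC (-c) u v = fC c v u := by
  rw [fC, fC, ← neg_div_neg_eq]
  congr 1 <;> ring

lemma gC_swap (c u v : ℂ) : gC c v u = -gC c u v := by
  rw [gC, gC, ← neg_sub u v, div_neg]

@[simp] lemma hC_self (hc : c ≠ 0) (x : ℂ) : hC c x x = 1 := by simp [hC, hc]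

lemma fC_eq_one_add_gC (h : a ≠ b) : fC c a b = 1 + gC c a b := by
  have := sub_ne_zero.2 h
  unfold fC gC
  field_simp

/-- The double product `f(X, Y)` over two finite sets of parameters. -/
def fprod (c : ℂ) (X Y : Finset ℂ) : ℂ := ∏ a ∈ X, ∏ b ∈ Y, fC c a b

@[simp] lemma fprod_empty_left : fprod c ∅ Y = 1 := by simp [fprod]

@[simp] lemma fprod_empty_right : fprod c X ∅ = 1 := by simp [fprod]

@[simp] lemma fprod_singleton : fprod c {a} {b} = fC c a b := by simp [fprod]

lemma fprod_neg (c : ℂ) (X Y : Finset ℂ) : fprod (-c) X Y = fprod c Y X := by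
  simp only [fprod, fC_neg]
  exact prod_comm

lemma fprod_union_left (h : Disjoint X X') : fprod c (X ∪ X') Y = fprod c X Y * fprod c X' Y :=
  prod_union h

lemma fprod_union_right (h : Disjoint Y Y') :
    fprod c X (Y ∪ Y') = fprod c X Y * fprod c X Y' := by
  simp only [fprod, prod_union h, prod_mul_distrib]

lemma fprod_insert_left (h : a ∉ X) :
    fprod c (insert a X) Y = fprod c {a} Y * fprod c X Y :=
  fprod_union_left (disjoint_singleton_left.2 h)

lemma fprod_insert_right (h : a ∉ Y) :
    fprod c X (insert a Y) = fprod c X {a} * fprod c X Y :=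
  fprod_union_right (disjoint_singleton_left.2 h)

lemma fprod_erase_left (h : a ∈ X) : fprod c X Y = fprod c {a} Y * fprod c (X.erase a) Y := by
  rw [← fprod_insert_left (notMem_erase a X), insert_erase h]

lemma fprod_erase_right (h : a ∈ Y) : fprod c X Y = fprod c X {a} * fprod c X (Y.erase a) := by
  rw [← fprod_insert_right (notMem_erase a Y), insert_erase h]

lemma fprod_image {ι κ : Type*} {x : ι → ℂ} {y : κ → ℂ} (hx : Function.Injective x)
    (hy : Function.Injective y) (s : Finset ι) (t : Finset κ) :
    fprod c (s.image x) (t.image y) = ∏ i ∈ s, ∏ j ∈ t, fC c (x i) (y j) := by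
  simp only [fprod, prod_image hx.injOn, prod_image hy.injOn]

/-- No two parameters in `W` differ by `c`, so that `f` and `h` do not vanish on `W`. -/
def ShiftFree (c : ℂ) (W : Finset ℂ) : Prop := ∀ a ∈ W, ∀ b ∈ W, a - b ≠ c

namespace ShiftFree

lemma mono (h : ShiftFree c W) (hs : W' ⊆ W) : ShiftFree c W' :=
  fun a ha b hb => h a (hs ha) b (hs hb)

lemma neg (h : ShiftFree c W) : ShiftFree (-c) W := fun a ha b hb e =>
  h b hb a ha (by rw [← neg_sub, e, neg_neg])

lemma sub_add_ne_zero (h : ShiftFree c W) (ha : a ∈ W) (hb : b ∈ W) : a - b + c ≠ 0 := fun e =>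
  h b hb a ha (by linear_combination -e)

end ShiftFree

lemma fC_div_hC (hc : c ≠ 0) (h : a - b + c ≠ 0) : fC c a b / hC c a b = gC c a b := by
  unfold fC hC gC
  field_simp

lemma fC_mul_gC_sub (hsx : s ≠ x) (htx : t ≠ x) (hst : s ≠ t) :
    fC c t x * gC c s x - gC c t x * gC c s t = fC c t s * gC c s x := by
  have h₁ := sub_ne_zero.2 hsx
  have h₂ := sub_ne_zero.2 htx
  have h₃ := sub_ne_zero.2 hst
  have h₄ := sub_ne_zero.2 hst.symm
  unfold fC gC
  field_simp
  ring

lemma fC_mul_fC_add_gC_sq (h : x ≠ y) : fC c x y * fC c y x + gC c x y ^ 2 = 1 := by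
  have h₁ := sub_ne_zero.2 h
  have h₂ := sub_ne_zero.2 h.symm
  unfold fC gC
  field_simp
  ring

lemma fC_mul_fC_div_hC (hc : c ≠ 0) (hxy : y ≠ x) (hay : a ≠ y) (hx : a - x + c ≠ 0)
    (hy : a - y + c ≠ 0) :
    fC c y x * (fC c a y / hC c a x) = 1 / hC c a x + gC c y x * (fC c a y / hC c a y) := by
  have h₁ := sub_ne_zero.2 hxy
  have h₂ := sub_ne_zero.2 hay
  unfold fC gC hC
  field_simp
  ring

-- Induction on `R`, with `x` running over everything outside `R`; the new point `t` enters
-- through `fC_mul_gC_sub`.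
lemma sum_gC_mul_fprod (c : ℂ) (R : Finset ℂ) {x : ℂ} (hx : x ∉ R) :
    ∑ s ∈ R, gC c s x * fprod c {s} (R.erase s) = 1 - fprod c {x} R := by
  induction R using Finset.induction_on generalizing x with
  | empty => simp
  | insert t R ht ih =>
    obtain ⟨hxt, hxR⟩ : x ≠ t ∧ x ∉ R := by simpa [not_or] using hx
    have hterm : ∀ s ∈ R, gC c s x * fprod c {s} ((insert t R).erase s)
        = fC c x t * (gC c s x * fprod c {s} (R.erase s))
          - gC c x t * (gC c s t * fprod c {s} (R.erase s)) := by
      intro s hs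
      have hst : s ≠ t := ne_of_mem_of_not_mem hs ht
      have hscalar := fC_mul_gC_sub (c := -c) (ne_of_mem_of_not_mem hs hxR) (Ne.symm hxt) hst
      simp only [fC_neg, gC_neg, gC_swap c s] at hscalar
      rw [erase_insert_of_ne hst.symm, fprod_insert_right (by simp [ht]), fprod_singleton]
      linear_combination fprod c {s} (R.erase s) * hscalar
    rw [sum_insert ht, erase_insert ht, sum_congr rfl hterm, sum_sub_distrib, ← mul_sum, ← mul_sum,
      ih hxR, ih ht, fprod_insert_right ht, fprod_singleton, fC_eq_one_add_gC hxt, gC_swap]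
    ring

lemma fprod_sub_mem (hx : x ∈ X) : fprod c {x - c} X = 0 := by
  rw [fprod_erase_right hx, fprod_singleton, fC]
  simp

lemma fprod_sub_mul_fprod (hW : ShiftFree c W) (hX : X ⊆ W) (hxW : x ∈ W) (hx : x ∉ X) :
    fprod c {x - c} X * fprod c X {x} = 1 := by
  simp only [fprod, prod_singleton, ← prod_mul_distrib]
  refine prod_eq_one fun s hs => ?_
  have h₁ := hW.sub_add_ne_zero (hX hs) hxW
  have h₂ := sub_ne_zero.2 (ne_of_mem_of_not_mem hs hx)
  have h₃ : x - c - s ≠ 0 := fun e => h₁ (by linear_combination -e)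
  unfold fC
  field_simp
  ring

end RationalFunctions

/-! ### The lowering operator -/

section Lowering

variable {M : Type*} [AddCommGroup M] [Module ℂ M] {c x y : ℂ} {w : ℂ → ℂ} {W Z : Finset ℂ}

/-- The operator by which a diagonal entry of the monodromy matrix acts on families `W ↦ K W` of
Bethe vectors: it removes one parameter `a` from `W`, with weight `w a f(a, W \ a) / h(a, x)`. The
entry `ν₂₂` corresponds to `c` and the entry `ν₁₁` to `-c`. -/
def lowering (c x : ℂ) (w : ℂ → ℂ) : Module.End ℂ (Finset ℂ → M) where
  toFun K W := ∑ a ∈ W, (w a * (fprod c {a} (W.erase a) / hC c a x)) • K (W.erase a)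
  map_add' K K' := by
    ext W
    simp only [Pi.add_apply, smul_add, sum_add_distrib]
  map_smul' r K := by
    ext W
    simp only [Pi.smul_apply, smul_sum, RingHom.id_apply, smul_comm r]

lemma lowering_apply (K : Finset ℂ → M) (W : Finset ℂ) :
    lowering c x w K W
      = ∑ a ∈ W, (w a * (fprod c {a} (W.erase a) / hC c a x)) • K (W.erase a) := rfl

lemma lowering_congr {K K' : Finset ℂ → M} (h : ∀ a ∈ W, K (W.erase a) = K' (W.erase a)) :
    lowering c x w K W = lowering c x w K' W :=
  sum_congr rfl fun a ha => by rw [h a ha]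

lemma map_lowering {M' : Type*} [AddCommGroup M'] [Module ℂ M'] (φ : M →ₗ[ℂ] M')
    {K : Finset ℂ → M} {K' : Finset ℂ → M'} (h : ∀ a ∈ W, φ (K (W.erase a)) = K' (W.erase a)) :
    φ (lowering c x w K W) = lowering c x w K' W := by
  simp only [lowering_apply, map_sum, map_smul]
  exact sum_congr rfl fun a ha => by rw [h a ha]

lemma lowering_smul (c x k : ℂ) (w : ℂ → ℂ) :
    lowering (M := M) c x (k • w) = k • lowering c x w := by
  ext K W
  simp only [lowering_apply, LinearMap.smul_apply, Pi.smul_apply, smul_sum, smul_smul, smul_eq_mul,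
    mul_assoc]

/-- The combination `1 - lowering / (1 - μ)`, in terms of which the entry `ν₂₁` acts on modified
Bethe vectors. -/
def dressedLowering (c μ x : ℂ) (w : ℂ → ℂ) : Module.End ℂ (Finset ℂ → M) :=
  1 - (1 - μ)⁻¹ • lowering c x w

lemma dressedLowering_apply (μ : ℂ) (K : Finset ℂ → M) (W : Finset ℂ) :
    dressedLowering c μ x w K W = K W - (1 - μ)⁻¹ • lowering c x w K W := rfl

lemma map_dressedLowering {M' : Type*} [AddCommGroup M'] [Module ℂ M'] (φ : M →ₗ[ℂ] M') {μ : ℂ}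
    {K : Finset ℂ → M} {K' : Finset ℂ → M'} (h : ∀ R ⊆ W, φ (K R) = K' R) :
    φ (dressedLowering c μ x w K W) = dressedLowering c μ x w K' W := by
  rw [dressedLowering_apply, map_sub, map_smul, h W subset_rfl,
    map_lowering φ fun a _ => h _ (erase_subset a W), dressedLowering_apply]

lemma one_add_lowering {μ : ℂ} (hμ₁ : μ ≠ 1) (β : ℂ) :
    1 + lowering (M := M) c x (β⁻¹ • w) = dressedLowering c μ x (((1 - μ) * (-β)⁻¹) • w) := by
  have hμ : 1 - μ ≠ 0 := sub_ne_zero.2 hμ₁.symm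
  rw [dressedLowering, lowering_smul, lowering_smul, smul_smul, inv_mul_cancel_left₀ hμ, inv_neg,
    neg_smul, sub_neg_eq_add]

lemma fC_smul_lowering (hc : c ≠ 0) (hW : ShiftFree c W) (hx : x ∈ W) (hZ : Z ⊆ W)
    (hy : y ∈ Z) (hyx : y ≠ x) (K : Finset ℂ → M) :
    fC c y x • lowering c x w K Z
      = lowering c x w (fun R => K (insert y R)) (Z.erase y) + gC c y x • lowering c y w K Z := by
  simp only [lowering_apply, ← add_sum_erase Z _ hy, smul_add, smul_sum, smul_smul]
  rw [add_left_comm, ← sum_add_distrib]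
  congr 1
  · congr 1
    rw [hC_self hc, ← fC_div_hC hc (hW.sub_add_ne_zero (hZ hy) hx)]
    ring
  · refine sum_congr rfl fun a ha => ?_
    obtain ⟨hay, haZ⟩ := mem_erase.1 ha
    have hscalar := fC_mul_fC_div_hC hc hyx hay (hW.sub_add_ne_zero (hZ haZ) hx)
      (hW.sub_add_ne_zero (hZ haZ) (hZ hy))
    rw [erase_right_comm, insert_erase (mem_erase.2 ⟨hay.symm, hy⟩), ← add_smul,
      fprod_erase_right (mem_erase.2 ⟨hay.symm, hy⟩), fprod_singleton, erase_right_comm (a := a)]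
    congr 1
    linear_combination w a * fprod c {a} ((Z.erase y).erase a) * hscalar

-- Eliminate one of the two lowering operators between the two instances of `fC_smul_lowering`.
lemma lowering_eq_add (hc : c ≠ 0) (hW : ShiftFree c W) (hx : x ∈ W) (hy : y ∈ W) (hxy : x ≠ y)
    (K : Finset ℂ → M) :
    lowering c x w K W
      = fC c x y • lowering c x w (fun R => K (insert y R)) (W.erase y)
        + gC c y x • lowering c y w (fun R => K (insert x R)) (W.erase x) := by
  have hyx := fC_smul_lowering (w := w) hc hW hx subset_rfl hy hxy.symm K
  have hxy' := fC_smul_lowering (w := w) hc hW hy subset_rfl hx hxy K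
  have hone := fC_mul_fC_add_gC_sq (c := c) hxy
  rw [← sub_eq_iff_eq_add] at hyx hxy'
  rw [← hyx, ← hxy', gC_swap c x y]
  match_scalars
  · linear_combination -hone
  · ring

end Lowering

/-! ### Action on the Bethe vectors -/

section Action

variable {V : Type*} [AddCommGroup V] [Module ℂ V] {c : ℂ}

/-- The commutation relations of the `gl₂` Yangian for the entries of a monodromy matrix. -/
def IsYangian (c : ℂ) (T : Fin 2 → Fin 2 → ℂ → Module.End ℂ V) : Prop :=
  ∀ (i j k l : Fin 2) (x y : ℂ), x ≠ y →
    T i j x * T k l y - T k l y * T i j x = gC c x y • (T k j y * T i l x - T k j x * T i l y)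

namespace IsYangian

variable {T : Fin 2 → Fin 2 → ℂ → Module.End ℂ V} {x y : ℂ}

lemma twist_left (hT : IsYangian c T) (L : Matrix (Fin 2) (Fin 2) ℂ) :
    IsYangian c (fun i j x => ∑ a, L i a • T a j x) := by
  intro i j k l x y hxy
  have h := fun a a' => hT a j a' l x y hxy
  calc _ = ∑ a, ∑ a', (L i a * L k a') • (T a j x * T a' l y - T a' l y * T a j x) := by
        simp only [Fin.sum_univ_two, add_mul, mul_add, smul_mul_smul_comm]
        module
    _ = _ := by
        simp only [h, Fin.sum_univ_two, add_mul, mul_add, smul_mul_smul_comm]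
        module

lemma twist_right (hT : IsYangian c T) (R : Matrix (Fin 2) (Fin 2) ℂ) :
    IsYangian c (fun i j x => ∑ b, R b j • T i b x) := by
  intro i j k l x y hxy
  have h := fun b b' => hT i b k b' x y hxy
  calc _ = ∑ b, ∑ b', (R b j * R b' l) • (T i b x * T k b' y - T k b' y * T i b x) := by
        simp only [Fin.sum_univ_two, add_mul, mul_add, smul_mul_smul_comm]
        module
    _ = _ := by
        simp only [h, Fin.sum_univ_two, add_mul, mul_add, smul_mul_smul_comm]
        module

lemma mul_diag₀ (hT : IsYangian c T) (hxy : x ≠ y) :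
    T 0 0 x * T 0 1 y
      = fC (-c) x y • (T 0 1 y * T 0 0 x) + gC (-c) y x • (T 0 1 x * T 0 0 y) := by
  rw [fC_neg, gC_neg, fC_eq_one_add_gC hxy.symm, gC_swap c y x]
  have h := hT 0 1 0 0 y x hxy.symm
  rw [sub_eq_iff_eq_add] at h
  linear_combination (norm := (rw [gC_swap c x y]; module)) -h

lemma mul_diag₁ (hT : IsYangian c T) (hxy : x ≠ y) :
    T 1 1 x * T 0 1 y = fC c x y • (T 0 1 y * T 1 1 x) + gC c y x • (T 0 1 x * T 1 1 y) := by
  rw [fC_eq_one_add_gC hxy, gC_swap c x y]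
  linear_combination (norm := module) hT 1 1 0 1 x y hxy

lemma mul_lower (hT : IsYangian c T) (hxy : x ≠ y) :
    T 1 0 x * T 0 1 y
      = T 0 1 y * T 1 0 x + gC c x y • (T 0 0 y * T 1 1 x - T 0 0 x * T 1 1 y) :=
  sub_eq_iff_eq_add'.1 (hT 1 0 0 1 x y hxy)

end IsYangian

/-- `B W` is the modified Bethe vector `ν₁₂(W)|0⟩` of a monodromy matrix `T` with twist parameters
`β₁`, `β₂` and vacuum `|0⟩ = B ∅` of weights `l₁`, `l₂`. For `β₁ = β₂ = 0` these are the usual Bethe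
vectors over a highest weight vector. -/
structure IsBetheFamily (c β₁ β₂ : ℂ) (T : Fin 2 → Fin 2 → ℂ → Module.End ℂ V) (l₁ l₂ : ℂ → ℂ)
    (B : Finset ℂ → V) : Prop where
  isYangian : IsYangian c T
  insert_eq : ∀ a W, a ∉ W → B (insert a W) = T 0 1 a (B W)
  diag₀ : ∀ x, T 0 0 x (B ∅) = l₁ x • B ∅ + β₂ • T 0 1 x (B ∅)
  diag₁ : ∀ x, T 1 1 x (B ∅) = l₂ x • B ∅ + β₁ • T 0 1 x (B ∅)
  lower : ∀ x, T 1 0 x (B ∅) = (β₁ * l₁ x + β₂ * l₂ x) • B ∅ + (β₁ * β₂) • T 0 1 x (B ∅)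

-- A diagonal entry `t` is moved through the creation operators `b` one at a time;
-- `lowering_eq_add` recombines the two terms of the exchange relation.
lemma diag_apply_eq_lowering {t b : ℂ → Module.End ℂ V} {l : ℂ → ℂ} {B : Finset ℂ → V} (hc : c ≠ 0)
    (ht : ∀ x y, x ≠ y → t x * b y = fC c x y • (b y * t x) + gC c y x • (b x * t y))
    (hb : ∀ a W, a ∉ W → B (insert a W) = b a (B W)) (hl : ∀ x, t x (B ∅) = l x • B ∅)
    {W : Finset ℂ} : ∀ {x : ℂ}, x ∉ W → ShiftFree c (insert x W) →
      t x (B W) = lowering c x l B (insert x W) := by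
  have hcreate : ∀ {x y : ℂ} {R : Finset ℂ}, y ∉ R →
      b y (lowering c x l B R) = lowering c x l (fun S => B (insert y S)) R := fun hy =>
    map_lowering _ fun a _ => (hb _ _ fun h => hy (mem_of_mem_erase h)).symm
  induction W using Finset.induction_on with
  | empty =>
    intro x _ _
    simp [lowering_apply, hl, hC_self hc]
  | insert y W hy ih =>
    intro x hx hG
    obtain ⟨hxy, hxW⟩ : x ≠ y ∧ x ∉ W := by simpa [not_or] using hx
    have hexch := LinearMap.congr_fun (ht x y hxy) (B W)
    simp only [LinearMap.add_apply, LinearMap.smul_apply, Module.End.mul_apply] at hexch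
    rw [hb y W hy, hexch, ih hxW (hG.mono (by grind)), ih hy (hG.mono (by grind)),
      hcreate (by grind), hcreate (by grind),
      lowering_eq_add hc hG (by simp) (by simp) hxy,
      show (insert x (insert y W)).erase y = insert x W by grind,
      show (insert x (insert y W)).erase x = insert y W by grind]

namespace IsBetheFamily

variable {T : Fin 2 → Fin 2 → ℂ → Module.End ℂ V} {l₁ l₂ : ℂ → ℂ} {B : Finset ℂ → V} {x : ℂ}
  {W : Finset ℂ}

lemma diag₀_apply (hB : IsBetheFamily c 0 0 T l₁ l₂ B) (hc : c ≠ 0) (hx : x ∉ W)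
    (hG : ShiftFree c (insert x W)) : T 0 0 x (B W) = lowering (-c) x l₁ B (insert x W) :=
  diag_apply_eq_lowering (neg_ne_zero.2 hc) (fun _ _ => hB.isYangian.mul_diag₀) hB.insert_eq
    (by simpa using hB.diag₀) hx hG.neg

lemma diag₁_apply (hB : IsBetheFamily c 0 0 T l₁ l₂ B) (hc : c ≠ 0) (hx : x ∉ W)
    (hG : ShiftFree c (insert x W)) : T 1 1 x (B W) = lowering c x l₂ B (insert x W) :=
  diag_apply_eq_lowering hc (fun _ _ => hB.isYangian.mul_diag₁) hB.insert_eq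
    (by simpa using hB.diag₁) hx hG

lemma create_lowering (hB : IsBetheFamily c 0 0 T l₁ l₂ B) {d y : ℂ} {l : ℂ → ℂ} (hy : y ∉ W) :
    T 0 1 y (lowering d x l B W) = lowering d x l (fun R => B (insert y R)) W :=
  map_lowering _ fun _ _ => (hB.insert_eq _ _ fun h => hy (mem_of_mem_erase h)).symm

lemma diag₀_lowering (hB : IsBetheFamily c 0 0 T l₁ l₂ B) (hc : c ≠ 0) {y : ℂ} {l : ℂ → ℂ}
    (hy : y ∉ W) (hG : ShiftFree c (insert y W)) :
    T 0 0 y (lowering c x l B W)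
      = lowering c x l (fun R => lowering (-c) y l₁ B (insert y R)) W :=
  map_lowering _ fun _ _ => hB.diag₀_apply hc (fun h => hy (mem_of_mem_erase h))
    (hG.mono (insert_subset_insert _ (erase_subset _ _)))

-- As for the diagonal entries; the commutator term is absorbed by `fC_smul_lowering`.
lemma lower_apply (hB : IsBetheFamily c 0 0 T l₁ l₂ B) (hc : c ≠ 0) (hx : x ∉ W)
    (hG : ShiftFree c (insert x W)) :
    T 1 0 x (B W) = lowering c x l₂ (lowering (-c) x l₁ B) (insert x W) := by
  induction W using Finset.induction_on with
  | empty => simp [lowering_apply, hB.lower]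
  | insert y W hy ih =>
    obtain ⟨hxy, hxW⟩ : x ≠ y ∧ x ∉ W := by simpa [not_or] using hx
    have hGx : ShiftFree c (insert x W) := hG.mono (by grind)
    have hGy : ShiftFree c (insert y W) := hG.mono (by grind)
    have hexch := LinearMap.congr_fun (hB.isYangian.mul_lower hxy) (B W)
    simp only [LinearMap.add_apply, LinearMap.smul_apply, LinearMap.sub_apply,
      Module.End.mul_apply] at hexch
    rw [hB.insert_eq y W hy, hexch, ih hxW hGx, hB.diag₁_apply hc hxW hGx,
      hB.diag₁_apply hc hy hGy, hB.diag₀_lowering hc (by grind) (hG.mono (by grind)),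
      hB.diag₀_lowering hc (by grind) hG,
      map_lowering _ fun a _ => hB.create_lowering (by grind)]
    have hcombine : fC c x y • lowering c x l₂ (fun R => lowering (-c) x l₁ B (insert y R))
          (insert x W)
        = lowering c x l₂ (lowering (-c) x l₁ fun R => B (insert y R)) (insert x W)
          + gC c x y • lowering c x l₂ (fun R => lowering (-c) y l₁ B (insert y R))
            (insert x W) := by
      rw [← Pi.smul_apply, ← map_smul, ← Pi.smul_apply, ← map_smul, ← Pi.add_apply, ← map_add]
      refine lowering_congr fun a _ => ?_
      have h := fC_smul_lowering (w := l₁) (Z := insert y ((insert x W).erase a))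
        (neg_ne_zero.2 hc) hG.neg (by simp) (by grind) (mem_insert_self _ _) hxy.symm B
      rwa [fC_neg, gC_neg, erase_insert (by grind)] at h
    rw [lowering_eq_add hc hG (by simp) (by simp) hxy,
      show (insert x (insert y W)).erase y = insert x W by grind,
      show (insert x (insert y W)).erase x = insert y W by grind, hcombine, gC_swap c x y]
    module

/-- The monodromy matrix `L T R` with `L = (1, 0; -β₁, 1)` and `R = (1, 0; -β₂, 1)`, for which a
modified vacuum becomes a highest weight vector. -/
def untwist (β₁ β₂ : ℂ) (T : Fin 2 → Fin 2 → ℂ → Module.End ℂ V) :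
    Fin 2 → Fin 2 → ℂ → Module.End ℂ V := fun i j x =>
  ∑ b, (!![1, 0; -β₂, 1] : Matrix (Fin 2) (Fin 2) ℂ) b j •
    ∑ a, (!![1, 0; -β₁, 1] : Matrix (Fin 2) (Fin 2) ℂ) i a • T a b x

variable {β₁ β₂ : ℂ}

lemma isBetheFamily_untwist (hB : IsBetheFamily c β₁ β₂ T l₁ l₂ B) :
    IsBetheFamily c 0 0 (untwist β₁ β₂ T) l₁ l₂ B where
  isYangian := (hB.isYangian.twist_left _).twist_right _
  insert_eq a W ha := by simp [untwist, hB.insert_eq a W ha]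
  diag₀ x := by simp [untwist, hB.diag₀]
  diag₁ x := by simp [untwist, hB.diag₁]
  lower x := by
    simp only [untwist, Fin.sum_univ_two, Matrix.of_apply, Matrix.cons_val', Matrix.cons_val_zero,
      Matrix.cons_val_one, Matrix.cons_val_fin_one, LinearMap.add_apply, LinearMap.smul_apply,
      hB.diag₀, hB.diag₁, hB.lower]
    module

lemma modified_lower_apply (hB : IsBetheFamily c β₁ β₂ T l₁ l₂ B) (hc : c ≠ 0) (hβ₁ : β₁ ≠ 0)
    (hβ₂ : β₂ ≠ 0) (hx : x ∉ W) (hG : ShiftFree c (insert x W)) :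
    T 1 0 x (B W) = (β₁ * β₂) • ((1 + lowering c x (β₁⁻¹ • l₂))
      ((1 + lowering (-c) x (β₂⁻¹ • l₁)) B)) (insert x W) := by
  have hB' := hB.isBetheFamily_untwist
  have hdiag₀ := hB'.diag₀_apply hc hx hG
  have hdiag₁ := hB'.diag₁_apply hc hx hG
  have hlower := hB'.lower_apply hc hx hG
  simp only [untwist, Fin.sum_univ_two, Matrix.of_apply, Matrix.cons_val', Matrix.cons_val_zero,
    Matrix.cons_val_one, Matrix.cons_val_fin_one, LinearMap.add_apply, LinearMap.smul_apply,
    one_smul, zero_smul, add_zero, zero_add] at hdiag₀ hdiag₁ hlower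
  simp only [lowering_smul, LinearMap.add_apply, LinearMap.smul_apply, Module.End.one_apply,
    map_add, map_smul, Pi.add_apply, Pi.smul_apply, hB.insert_eq x W hx, ← hdiag₀, ← hdiag₁,
    ← hlower]
  match_scalars <;> field_simp <;> ring

end IsBetheFamily

end Action

/-! ### The modified Izergin determinant as a sum over subsets -/

section Izergin

variable {c z s t x μ : ℂ} {W X Y S T : Finset ℂ}

lemma lowering_mul_fprod_singleton (hc : c ≠ 0) (hW : ShiftFree c W) (hX : X ⊆ W) (hx : x ∈ W)
    (hs : s ∈ W) (hsX : s ∉ X) (hsx : s ≠ x) (K : Finset ℂ → ℂ) :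
    lowering c x 1 (fun R => fprod c R {s} * K R) X
      = fprod c X {s} * (fC c s x * lowering c x 1 K X - gC c s x * lowering c s 1 K X) := by
  simp only [lowering_apply, mul_sum, ← sum_sub_distrib, smul_eq_mul, Pi.one_apply, one_mul]
  refine sum_congr rfl fun a ha => ?_
  have hscalar := fC_mul_fC_div_hC hc hsx (ne_of_mem_of_not_mem ha hsX)
    (hW.sub_add_ne_zero (hX ha) hx) (hW.sub_add_ne_zero (hX ha) hs)
  rw [fprod_erase_left ha, fprod_singleton]
  linear_combination
    -fprod c (X.erase a) {s} * fprod c {a} (X.erase a) * K (X.erase a) * hscalar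

lemma lowering_one (hW : ShiftFree c W) (hX : X ⊆ W) (hx : x ∈ W) :
    lowering c x 1 (fun _ => (1 : ℂ)) X = 1 - fprod c {x - c} X := by
  rw [← sum_gC_mul_fprod c X fun h => hW x hx _ (hX h) (sub_sub_cancel x c)]
  refine sum_congr rfl fun a _ => ?_
  rw [gC, hC, Pi.one_apply, smul_eq_mul, one_mul, mul_one, div_div_eq_mul_div, sub_sub_eq_add_sub,
    sub_add_eq_add_sub]
  ring

-- Induction on `S`: a new point `t` enters through `lowering_mul_fprod_singleton`, and the pole
-- terms recombine by `fC_mul_gC_sub`.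
lemma lowering_fprod (hc : c ≠ 0) (hW : ShiftFree c W) (hX : X ⊆ W) (hXS : Disjoint X S) :
    S ⊆ W → ∀ {x : ℂ}, x ∈ W → x ∉ S → lowering c x 1 (fun R => fprod c R S) X
      = fprod c X S * (1 - fprod c S {x} * fprod c {x - c} X)
        + ∑ s ∈ S, gC c s x * fprod c (S.erase s) {s} * fprod c X (S.erase s) := by
  induction S using Finset.induction_on with
  | empty =>
    intro _ x hx _
    simp [lowering_one hW hX hx]
  | insert t S ht ih =>
    intro hS x hx hxS
    obtain ⟨htX, hXS⟩ := disjoint_insert_right.1 hXS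
    obtain ⟨htW, hSW⟩ := insert_subset_iff.1 hS
    obtain ⟨hxt, hxS⟩ : x ≠ t ∧ x ∉ S := by simpa [not_or] using hxS
    have hpole : ∀ s ∈ S, gC c s x * fprod c ((insert t S).erase s) {s}
          * fprod c X ((insert t S).erase s)
        = fprod c X {t} * (fC c t x * (gC c s x * fprod c (S.erase s) {s} * fprod c X (S.erase s))
          - gC c t x * (gC c s t * fprod c (S.erase s) {s} * fprod c X (S.erase s))) := by
      intro s hs
      have hst := ne_of_mem_of_not_mem hs ht
      rw [erase_insert_of_ne hst.symm, fprod_insert_left (by simp [ht]),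
        fprod_insert_right (by simp [ht]), fprod_singleton]
      linear_combination -fprod c X {t} * fprod c (S.erase s) {s} * fprod c X (S.erase s)
        * fC_mul_gC_sub (c := c) (ne_of_mem_of_not_mem hs hxS) (Ne.symm hxt) hst
    simp only [fprod_insert_right ht]
    rw [lowering_mul_fprod_singleton hc hW hX hx htW htX (Ne.symm hxt), ih hXS hSW hx hxS,
      ih hXS hSW htW ht, sum_insert ht, erase_insert ht, sum_congr rfl hpole, ← mul_sum,
      sum_sub_distrib, ← mul_sum, ← mul_sum, fprod_insert_left ht, fprod_singleton,
      fC_eq_one_add_gC (Ne.symm hxt)]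
    linear_combination gC c t x * fprod c X S * fprod c S {t}
      * fprod_sub_mul_fprod hW hX htW htX

section PowersetSums

variable {α M : Type*} [DecidableEq α] [AddCommMonoid M]

lemma sum_sum_powerset_erase (W : Finset α) (F : α → Finset α → M) :
    ∑ a ∈ W, ∑ T ∈ (W.erase a).powerset, F a T = ∑ S ∈ W.powerset, ∑ a ∈ S, F a (S.erase a) := by
  rw [sum_sigma', sum_sigma']
  refine sum_bij' (fun p _ => ⟨insert p.1 p.2, p.1⟩) (fun p _ => ⟨p.2, p.1.erase p.2⟩)
    ?_ ?_ ?_ ?_ ?_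
  · simp only [mem_sigma, mem_powerset]
    grind
  · simp only [mem_sigma, mem_powerset]
    grind
  all_goals
    simp only [mem_sigma, mem_powerset]
    rintro ⟨_, _⟩ h
    grind [insert_erase, erase_insert]

lemma sum_powerset_sum_erase (W : Finset α) (F : α → Finset α → M) :
    ∑ S ∈ W.powerset, ∑ a ∈ S, F a (S.erase a) = ∑ T ∈ W.powerset, ∑ a ∈ W \ T, F a T := by
  rw [← sum_sum_powerset_erase]
  exact sum_comm' fun a T => by simp only [mem_powerset, mem_sdiff, subset_erase]; tauto

end PowersetSums

/-- The `X`-independent coefficient of the term indexed by `S` in the expansion of the modified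
Izergin determinant `K^{(z)}(X|Y)` over principal minors. -/
def izerginWeight (c z : ℂ) (Y S : Finset ℂ) : ℂ := (-z) ^ #(Y \ S) * fprod c S (Y \ S)

/-- The modified Izergin determinant `K^{(z)}(X|Y)` of finite sets of parameters, in the form of its
expansion over principal minors; see `KIz_eq_izergin`. -/
def izergin (c z : ℂ) (X Y : Finset ℂ) : ℂ :=
  ∑ S ∈ Y.powerset, izerginWeight c z Y S * fprod c X S

@[simp] lemma izergin_empty_right : izergin c z X ∅ = 1 := by simp [izergin, izerginWeight]

lemma izerginWeight_mul_fprod_erase (hS : S ⊆ Y) (hs : s ∈ S) :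
    z * izerginWeight c z Y S * fprod c (S.erase s) {s}
      = -(izerginWeight c z Y (S.erase s) * fprod c {s} ((Y \ S.erase s).erase s)) := by
  have hsY : s ∉ Y \ S := by simp [hs]
  have hcompl : Y \ S.erase s = insert s (Y \ S) := by grind
  rw [izerginWeight, izerginWeight, hcompl, erase_insert hsY, card_insert_of_notMem hsY,
    fprod_insert_right hsY, fprod_erase_left hs]
  ring

lemma sum_izerginWeight_mul_pole (hx : x ∉ Y) (X : Finset ℂ) :
    z * ∑ S ∈ Y.powerset, izerginWeight c z Y S *
        ∑ s ∈ S, gC c s x * fprod c (S.erase s) {s} * fprod c X (S.erase s)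
      = ∑ S ∈ Y.powerset, izerginWeight c z Y S * fprod c X S * (fprod c {x} (Y \ S) - 1) := by
  calc _ = ∑ S ∈ Y.powerset, ∑ s ∈ S, -(gC c s x * izerginWeight c z Y (S.erase s)
          * fprod c {s} ((Y \ S.erase s).erase s) * fprod c X (S.erase s)) := by
        simp only [mul_sum]
        refine sum_congr rfl fun S hS => sum_congr rfl fun s hs => ?_
        linear_combination gC c s x * fprod c X (S.erase s)
          * izerginWeight_mul_fprod_erase (c := c) (z := z) (mem_powerset.1 hS) hs
    _ = ∑ S ∈ Y.powerset, ∑ s ∈ Y \ S, -(gC c s x * izerginWeight c z Y S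
          * fprod c {s} ((Y \ S).erase s) * fprod c X S) :=
        sum_powerset_sum_erase Y fun s T => -(gC c s x * izerginWeight c z Y T
          * fprod c {s} ((Y \ T).erase s) * fprod c X T)
    _ = _ := by
        refine sum_congr rfl fun S _ => ?_
        rw [← neg_sub 1, ← sum_gC_mul_fprod c (Y \ S) (by simp [hx]), mul_neg, mul_sum,
          sum_neg_distrib]
        exact congrArg _ (sum_congr rfl fun s _ => by ring)

lemma mul_lowering_izergin (hc : c ≠ 0) (hW : ShiftFree c W) (hX : X ⊆ W) (hY : Y ⊆ W)
    (hxW : x ∈ W) (hXY : Disjoint X Y) (hx : x ∉ Y) :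
    z * lowering c x 1 (fun R => izergin c z R Y) X
      = (z - 1) * izergin c z X Y
        + ∑ S ∈ Y.powerset, izerginWeight c z Y S * fprod c X S * fprod c {x} (Y \ S)
        - z * fprod c {x - c} X *
          ∑ S ∈ Y.powerset, izerginWeight c z Y S * fprod c X S * fprod c S {x} := by
  have hexpand : lowering c x 1 (fun R => izergin c z R Y) X
      = ∑ S ∈ Y.powerset, (izerginWeight c z Y S * fprod c X S
            * (1 - fprod c S {x} * fprod c {x - c} X)
          + izerginWeight c z Y S *
            ∑ s ∈ S, gC c s x * fprod c (S.erase s) {s} * fprod c X (S.erase s)) := by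
    have hsum : (fun R => izergin c z R Y)
        = ∑ S ∈ Y.powerset, izerginWeight c z Y S • fun R => fprod c R S := by
      ext R
      simp [izergin]
    rw [hsum, map_sum, Finset.sum_apply]
    refine sum_congr rfl fun S hS => ?_
    rw [mem_powerset] at hS
    rw [map_smul, Pi.smul_apply, lowering_fprod hc hW hX (disjoint_of_subset_right hS hXY)
      (hS.trans hY) hxW fun h => hx (hS h), smul_eq_mul, mul_add, mul_assoc]
  rw [hexpand, sum_add_distrib, mul_add, sum_izerginWeight_mul_pole hx, izergin]
  simp only [mul_sum]
  rw [← sum_add_distrib, ← sum_add_distrib, ← sum_sub_distrib]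
  exact sum_congr rfl fun S _ => by ring

lemma izergin_insert_right (hx : x ∉ Y) :
    izergin c z X (insert x Y)
      = fprod c X {x} *
          ∑ S ∈ Y.powerset, izerginWeight c z Y S * fprod c X S * fprod c {x} (Y \ S)
        - z * ∑ S ∈ Y.powerset, izerginWeight c z Y S * fprod c X S * fprod c S {x} := by
  rw [izergin, sum_powerset_insert hx, add_comm, sub_eq_add_neg, ← neg_mul, mul_sum, mul_sum]
  congr 1 <;> refine sum_congr rfl fun S hS => ?_
  all_goals
    have hxS : x ∉ S := fun h => hx (mem_powerset.1 hS h)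
  · rw [izerginWeight, izerginWeight, show insert x Y \ insert x S = Y \ S by grind,
      fprod_insert_left hxS, fprod_insert_right hxS]
    ring
  · have hxYS : x ∉ Y \ S := by simp [hx]
    rw [izerginWeight, izerginWeight, show insert x Y \ S = insert x (Y \ S) by grind,
      card_insert_of_notMem hxYS, fprod_insert_right hxYS]
    ring

lemma dressedLowering_izergin_insert (hc : c ≠ 0) (hμ₀ : μ ≠ 0) (hμ₁ : μ ≠ 1)
    (hW : ShiftFree c W) (hX : X ⊆ W) (hY : Y ⊆ W) (hxW : x ∈ W) (hXY : Disjoint X Y) (hxX : x ∉ X)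
    (hxY : x ∉ Y) :
    dressedLowering c μ x 1 (fun R => izergin c μ⁻¹ R Y) (insert x X)
      = -(μ / (1 - μ)) * (fprod c {x} Y * izergin c μ⁻¹ X Y) := by
  have hμ : 1 - μ ≠ 0 := sub_ne_zero.2 hμ₁.symm
  have hmain := mul_lowering_izergin (z := μ⁻¹) hc hW (insert_subset hxW hX) hY hxW
    (disjoint_insert_left.2 ⟨hxY, hXY⟩) hxY
  have hfactor : ∑ S ∈ Y.powerset, izerginWeight c μ⁻¹ Y S * fprod c (insert x X) S
      * fprod c {x} (Y \ S) = fprod c {x} Y * izergin c μ⁻¹ X Y := by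
    rw [izergin, mul_sum]
    refine sum_congr rfl fun S hS => ?_
    rw [fprod_insert_left hxX, ← union_sdiff_of_subset (mem_powerset.1 hS),
      fprod_union_right disjoint_sdiff, union_sdiff_of_subset (mem_powerset.1 hS)]
    ring
  rw [hfactor, fprod_sub_mem (mem_insert_self x X)] at hmain
  rw [dressedLowering_apply, smul_eq_mul]
  field_simp at hmain ⊢
  linear_combination -hmain

lemma fprod_mul_dressedLowering_izergin (hc : c ≠ 0) (hμ₀ : μ ≠ 0) (hμ₁ : μ ≠ 1)
    (hW : ShiftFree c W) (hX : X ⊆ W) (hY : Y ⊆ W) (hxW : x ∈ W) (hXY : Disjoint X Y) (hxX : x ∉ X)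
    (hxY : x ∉ Y) :
    fprod c X {x} * dressedLowering c μ x 1 (fun R => izergin c μ⁻¹ R Y) X
      = -(μ / (1 - μ)) * izergin c μ⁻¹ X (insert x Y) := by
  have hμ : 1 - μ ≠ 0 := sub_ne_zero.2 hμ₁.symm
  have hmain := mul_lowering_izergin (z := μ⁻¹) hc hW hX hY hxW hXY hxY
  have hinv := fprod_sub_mul_fprod hW hX hxW hxX
  rw [izergin_insert_right hxY]
  rw [dressedLowering_apply, smul_eq_mul]
  set A := ∑ S ∈ Y.powerset, izerginWeight c μ⁻¹ Y S * fprod c X S * fprod c {x} (Y \ S)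
  set B := ∑ S ∈ Y.powerset, izerginWeight c μ⁻¹ Y S * fprod c X S * fprod c S {x}
  field_simp at hmain ⊢
  linear_combination -fprod c X {x} * hmain + B * hinv

end Izergin

/-! ### Sums over partitions -/

section PartitionSum

variable {c x : ℂ} {p q : ℂ → ℂ} {H : Finset ℂ → Finset ℂ → ℂ} {W : Finset ℂ}

/-- The sum `∑ p(A) q(B) f(A, B) H(A, B)` over the partitions of `W` into `A` and `B`. -/
def partitionSum (c : ℂ) (p q : ℂ → ℂ) (H : Finset ℂ → Finset ℂ → ℂ) (W : Finset ℂ) : ℂ :=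
  ∑ A ∈ W.powerset, ((∏ a ∈ A, p a) * (∏ b ∈ W \ A, q b) * fprod c A (W \ A)) * H A (W \ A)

lemma partitionSum_congr {H' : Finset ℂ → Finset ℂ → ℂ}
    (h : ∀ A ⊆ W, H A (W \ A) = H' A (W \ A)) : partitionSum c p q H W = partitionSum c p q H' W :=
  sum_congr rfl fun A hA => by rw [h A (mem_powerset.1 hA)]

lemma partitionSum_empty : partitionSum c p q H ∅ = H ∅ ∅ := by simp [partitionSum]

lemma mul_partitionSum (k : ℂ) :
    k * partitionSum c p q H W = partitionSum c p q (fun A B => k * H A B) W := by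
  simp only [partitionSum, mul_sum, mul_left_comm k]

lemma partitionSum_neg (c : ℂ) (p q : ℂ → ℂ) (H : Finset ℂ → Finset ℂ → ℂ) (W : Finset ℂ) :
    partitionSum (-c) p q H W = partitionSum c q p (fun A B => H B A) W := by
  refine sum_nbij' (W \ ·) (W \ ·) (by simp) (by simp) ?_ ?_ ?_ <;>
    simp +contextual [mem_powerset, fprod_neg, mul_comm]

lemma partitionSum_insert (hx : x ∉ W) :
    partitionSum c p q H (insert x W)
      = partitionSum c p q (fun A B => p x * (fprod c {x} B * H (insert x A) B)
          + q x * (fprod c A {x} * H A (insert x B))) W := by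
  simp only [partitionSum]
  rw [sum_powerset_insert hx, add_comm, ← sum_add_distrib]
  refine sum_congr rfl fun A hA => ?_
  have hxA : x ∉ A := fun h => hx (mem_powerset.1 hA h)
  have hxB : x ∉ W \ A := by simp [hx]
  rw [show insert x W \ insert x A = W \ A by grind,
    show insert x W \ A = insert x (W \ A) by grind, prod_insert hxA, prod_insert hxB,
    fprod_insert_left hxA, fprod_insert_right hxB]
  ring

lemma map_partitionSum (Λ : (Finset ℂ → ℂ) →ₗ[ℂ] ℂ) (F : Finset ℂ → Finset ℂ → Finset ℂ → ℂ) :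
    Λ (fun V => partitionSum c p q (F V) W)
      = partitionSum c p q (fun A B => Λ fun V => F V A B) W := by
  have hsum : (fun V => partitionSum c p q (F V) W) = ∑ A ∈ W.powerset,
      ((∏ a ∈ A, p a) * (∏ b ∈ W \ A, q b) * fprod c A (W \ A)) • fun V => F V A (W \ A) := by
    ext V
    simp [partitionSum]
  rw [hsum, map_sum]
  simp only [map_smul, smul_eq_mul, partitionSum]

lemma lowering_partitionSum (c x : ℂ) (p q : ℂ → ℂ) (H : Finset ℂ → Finset ℂ → ℂ) :
    lowering c x p (partitionSum c p q H)
      = partitionSum c p q fun A B => lowering c x 1 (fun R => H R B) A := by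
  ext W
  simp only [lowering_apply, partitionSum, smul_eq_mul, mul_sum, Pi.one_apply, one_mul]
  refine (sum_sum_powerset_erase W fun a A => p a * (fprod c {a} (W.erase a) / hC c a x) *
    (((∏ b ∈ A, p b) * (∏ b ∈ W.erase a \ A, q b) * fprod c A (W.erase a \ A)) *
      H A (W.erase a \ A))).trans ?_
  refine sum_congr rfl fun A hA => sum_congr rfl fun a ha => ?_
  have hcompl : W.erase a \ A.erase a = W \ A := by grind
  have hsplit : W.erase a = A.erase a ∪ W \ A := by grind [mem_powerset.1 hA ha]
  rw [hcompl, hsplit, fprod_union_right (by grind [disjoint_left]), ← mul_prod_erase A p ha,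
    fprod_erase_left (X := A) ha]
  ring

lemma lowering_neg_partitionSum (c x : ℂ) (p q : ℂ → ℂ) (H : Finset ℂ → Finset ℂ → ℂ) :
    lowering (-c) x q (partitionSum c p q H)
      = partitionSum c p q fun A B => lowering (-c) x 1 (fun R => H A R) B := by
  have h := lowering_partitionSum (-c) x q p fun A B => H B A
  ext W
  have hneg : partitionSum (-c) q p (fun A B => H B A) = partitionSum c p q H := by
    ext V
    exact partitionSum_neg c q p _ V
  rw [← hneg, h, partitionSum_neg]

lemma dressedLowering_partitionSum (c μ x : ℂ) (p q : ℂ → ℂ) (H : Finset ℂ → Finset ℂ → ℂ) :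
    dressedLowering c μ x p (partitionSum c p q H)
      = partitionSum c p q fun A B => dressedLowering c μ x 1 (fun R => H R B) A := by
  ext W
  rw [dressedLowering_apply, lowering_partitionSum]
  simp only [dressedLowering_apply, partitionSum, mul_sub, sum_sub_distrib, smul_eq_mul, mul_sum,
    mul_left_comm]

lemma dressedLowering_neg_partitionSum (c μ x : ℂ) (p q : ℂ → ℂ)
    (H : Finset ℂ → Finset ℂ → ℂ) :
    dressedLowering (-c) μ x q (partitionSum c p q H)
      = partitionSum c p q fun A B => dressedLowering (-c) μ x 1 (fun R => H A R) B := by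
  ext W
  rw [dressedLowering_apply, lowering_neg_partitionSum]
  simp only [dressedLowering_apply, partitionSum, mul_sub, sum_sub_distrib, smul_eq_mul, mul_sum,
    mul_left_comm]

end PartitionSum

/-! ### The scalar product -/

section ScalarProduct

variable {c β₁ β₂ μ x : ℂ} {l₁ l₂ q₁ q₂ : ℂ → ℂ} {A B U V W : Finset ℂ}

/-- The part of the scalar product that depends on the parameters `V` of the modified Bethe vector,
for a fixed partition of the dual parameters into `A` and `B`. -/
def bilinearKernel (c z : ℂ) (q₁ q₂ : ℂ → ℂ) (A B : Finset ℂ) : Finset ℂ → ℂ :=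
  partitionSum c q₂ q₁ fun A' B' => izergin c z A' B * izergin (-c) z B' A

lemma dressedLowering_mul (k : ℂ) (w : ℂ → ℂ) (K : Finset ℂ → ℂ) :
    dressedLowering c μ x w (fun R => k * K R) W = k * dressedLowering c μ x w K W :=
  congrFun ((dressedLowering c μ x w).map_smul k K) W

lemma dressedLowering_dressedLowering_bilinearKernel (z : ℂ) :
    dressedLowering c μ x q₂ (dressedLowering (-c) μ x q₁ (bilinearKernel c z q₁ q₂ A B))
      = partitionSum c q₂ q₁ fun A' B' =>
        dressedLowering c μ x 1 (fun R => izergin c z R B) A' *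
          dressedLowering (-c) μ x 1 (fun R => izergin (-c) z R A) B' := by
  rw [bilinearKernel, dressedLowering_neg_partitionSum, dressedLowering_partitionSum]
  simp_rw [dressedLowering_mul]
  simp_rw [mul_comm (izergin c z _ B), dressedLowering_mul]
  simp_rw [mul_comm (dressedLowering (-c) μ x _ _ _)]

lemma dressedLowering_bilinearKernel (hc : c ≠ 0) (hμ₀ : μ ≠ 0) (hμ₁ : μ ≠ 1)
    (hW : ShiftFree c W) (hV : insert x V ⊆ W) (hA : A ⊆ W) (hB : B ⊆ W) (hVA : Disjoint V A)
    (hVB : Disjoint V B) (hxV : x ∉ V) (hxA : x ∉ A) (hxB : x ∉ B) :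
    dressedLowering c μ x q₂
        (dressedLowering (-c) μ x q₁ (bilinearKernel c μ⁻¹ q₁ q₂ A B)) (insert x V)
      = (μ / (1 - μ)) ^ 2 * (q₂ x * (fprod c {x} B * bilinearKernel c μ⁻¹ q₁ q₂ (insert x A) B V)
          + q₁ x * (fprod c A {x} * bilinearKernel c μ⁻¹ q₁ q₂ A (insert x B) V)) := by
  obtain ⟨hxW, hVW⟩ := insert_subset_iff.1 hV
  rw [dressedLowering_dressedLowering_bilinearKernel, partitionSum_insert hxV, bilinearKernel,
    bilinearKernel]
  simp only [partitionSum, mul_sum, ← sum_add_distrib]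
  refine sum_congr rfl fun A' hA' => ?_
  rw [mem_powerset] at hA'
  have hB' : V \ A' ⊆ V := sdiff_subset
  have hA'_insert := dressedLowering_izergin_insert hc hμ₀ hμ₁ hW (hA'.trans hVW) hB hxW
    (hVB.mono_left hA') (fun h => hxV (hA' h)) hxB
  have hA'_erase := fprod_mul_dressedLowering_izergin hc hμ₀ hμ₁ hW (hA'.trans hVW) hB hxW
    (hVB.mono_left hA') (fun h => hxV (hA' h)) hxB
  have hB'_insert := dressedLowering_izergin_insert (neg_ne_zero.2 hc) hμ₀ hμ₁ hW.neg
    (hB'.trans hVW) hA hxW (hVA.mono_left hB') (fun h => hxV (hB' h)) hxA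
  have hB'_erase := fprod_mul_dressedLowering_izergin (neg_ne_zero.2 hc) hμ₀ hμ₁ hW.neg
    (hB'.trans hVW) hA hxW (hVA.mono_left hB') (fun h => hxV (hB' h)) hxA
  rw [fprod_neg] at hB'_insert hB'_erase
  rw [hA'_insert, hB'_insert, mul_left_comm (fprod c {x} (V \ A')), hB'_erase,
    ← mul_assoc (fprod c A' {x}), hA'_erase]
  ring

/-- The modified Izergin–Korepin sum over the partitions of the parameters `U` and `V`; the
powers of `μ`, `1 - μ`, `β₁` and `β₂` are distributed over the parameters. -/
def izerginKorepinSum (c β₁ β₂ μ : ℂ) (l₁ l₂ : ℂ → ℂ) (U V : Finset ℂ) : ℂ :=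
  partitionSum c ((μ ^ 2 * (1 - μ)⁻¹ * -β₂) • l₂) ((μ ^ 2 * (1 - μ)⁻¹ * -β₁) • l₁)
    (fun A B => bilinearKernel c μ⁻¹ (((1 - μ) * (-β₂)⁻¹) • l₁) (((1 - μ) * (-β₁)⁻¹) • l₂) A B V) U

lemma izerginKorepinSum_empty_left :
    izerginKorepinSum c β₁ β₂ μ l₁ l₂ ∅ V
      = partitionSum c (((1 - μ) * (-β₁)⁻¹) • l₂) (((1 - μ) * (-β₂)⁻¹) • l₁) (fun _ _ => 1) V := by
  simp [izerginKorepinSum, partitionSum_empty, bilinearKernel]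

lemma izerginKorepinSum_insert (hc : c ≠ 0) (hβ₁ : β₁ ≠ 0) (hβ₂ : β₂ ≠ 0) (hμ₀ : μ ≠ 0)
    (hμ₁ : μ ≠ 1) (hW : ShiftFree c (insert x U ∪ V)) (hUV : Disjoint U V) (hxU : x ∉ U)
    (hxV : x ∉ V) :
    izerginKorepinSum c β₁ β₂ μ l₁ l₂ (insert x U) V
      = β₁ * β₂ * dressedLowering c μ x (((1 - μ) * (-β₁)⁻¹) • l₂)
          (dressedLowering (-c) μ x (((1 - μ) * (-β₂)⁻¹) • l₁)
            (izerginKorepinSum c β₁ β₂ μ l₁ l₂ U)) (insert x V) := by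
  have hμ : 1 - μ ≠ 0 := sub_ne_zero.2 hμ₁.symm
  set q₁ := ((1 - μ) * (-β₂)⁻¹) • l₁
  set q₂ := ((1 - μ) * (-β₁)⁻¹) • l₂
  have hlin := map_partitionSum (c := c) (p := (μ ^ 2 * (1 - μ)⁻¹ * -β₂) • l₂)
    (q := (μ ^ 2 * (1 - μ)⁻¹ * -β₁) • l₁) (W := U)
    (LinearMap.proj (insert x V) ∘ₗ dressedLowering c μ x q₂ ∘ₗ dressedLowering (-c) μ x q₁)
    fun V A B => bilinearKernel c μ⁻¹ q₁ q₂ A B V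
  refine Eq.trans ?_ (congrArg (β₁ * β₂ * ·) hlin.symm)
  simp only [LinearMap.comp_apply, LinearMap.proj_apply]
  rw [izerginKorepinSum, partitionSum_insert hxU, mul_partitionSum]
  refine partitionSum_congr fun A hA => ?_
  have hB : U \ A ⊆ U := sdiff_subset
  rw [dressedLowering_bilinearKernel hc hμ₀ hμ₁ hW (by grind) (by grind) (by grind)
    (hUV.symm.mono_right hA) (hUV.symm.mono_right hB) hxV (fun h => hxU (hA h))
    fun h => hxU (hB h)]
  simp only [q₁, q₂, Pi.smul_apply, smul_eq_mul]
  field_simp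

lemma IsBetheFamily.scalarProduct_eq {E : Type*} [AddCommGroup E] [Module ℂ E]
    {T : Fin 2 → Fin 2 → ℂ → Module.End ℂ E} {B : Finset ℂ → E} {C : Finset ℂ → Module.End ℂ E}
    {Ω : Finset ℂ} (hB : IsBetheFamily c β₁ β₂ T l₁ l₂ B) (hc : c ≠ 0) (hβ₁ : β₁ ≠ 0)
    (hβ₂ : β₂ ≠ 0) (hμ₀ : μ ≠ 0) (hμ₁ : μ ≠ 1) (hC₀ : C ∅ = 1)
    (hC : ∀ a U, a ∉ U → C (insert a U) = C U * T 1 0 a) (φ : E →ₗ[ℂ] ℂ) (hΩ : ShiftFree c Ω)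
    (havg : ∀ W ⊆ Ω, φ (B W) = izerginKorepinSum c β₁ β₂ μ l₁ l₂ ∅ W) (hU : U ⊆ Ω) :
    ∀ {V : Finset ℂ}, V ⊆ Ω → Disjoint U V →
      φ (C U (B V)) = izerginKorepinSum c β₁ β₂ μ l₁ l₂ U V := by
  induction U using Finset.induction_on with
  | empty =>
    intro V hV _
    rw [hC₀, Module.End.one_apply, havg V hV]
  | insert x U hxU ih =>
    intro V hV hUV
    obtain ⟨hxΩ, hUΩ⟩ := insert_subset_iff.1 hU
    obtain ⟨hxV, hUV⟩ := disjoint_insert_left.1 hUV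
    have ih' : ∀ R ⊆ insert x V, (φ ∘ₗ C U) (B R) = izerginKorepinSum c β₁ β₂ μ l₁ l₂ U R :=
      fun R hR => ih hUΩ (hR.trans (insert_subset hxΩ hV))
        ((disjoint_insert_right.2 ⟨hxU, hUV⟩).mono_right hR)
    rw [hC x U hxU, Module.End.mul_apply, hB.modified_lower_apply hc hβ₁ hβ₂ hxV
      (hΩ.mono (insert_subset hxΩ hV)), one_add_lowering hμ₁, one_add_lowering hμ₁,
      izerginKorepinSum_insert hc hβ₁ hβ₂ hμ₀ hμ₁ (hΩ.mono (union_subset hU hV)) hUV hxU hxV,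
      ← LinearMap.comp_apply, map_smul, smul_eq_mul]
    exact congrArg _ (map_dressedLowering _ fun R hR => map_dressedLowering _ fun S hS =>
      ih' S (hS.trans hR))

end ScalarProduct

/-! ### Expansion of the determinant over principal minors -/

section Determinant

variable {ι κ : Type*} [Fintype κ] {c : ℂ}

lemma sum_powerset_image {α M : Type*} [DecidableEq α] [AddCommMonoid M] {y : κ → α}
    (hy : Function.Injective y) (F : Finset α → M) :
    ∑ S ∈ (univ.image y).powerset, F S = ∑ s : Finset κ, F (s.image y) := by
  rw [powerset_image, sum_image (image_injective hy).injOn, powerset_univ]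

variable [DecidableEq κ]

lemma image_univ_sdiff_image {α : Type*} [DecidableEq α] {y : κ → α} (hy : Function.Injective y)
    (s : Finset κ) : univ.image y \ s.image y = sᶜ.image y := by
  rw [← image_sdiff _ _ hy, compl_eq_univ_sdiff]

lemma det_eq_det_sub_mul {R : Type*} [CommRing R] {n : ℕ}
    (M : Matrix (Fin (n + 1)) (Fin (n + 1)) R) (h : M 0 0 = 1) :
    M.det = (Matrix.of fun j k : Fin n => M j.succ k.succ - M j.succ 0 * M 0 k.succ).det := by
  let A : Matrix (Fin (n + 1)) (Fin (n + 1)) R :=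
    Matrix.of (Fin.cons (M 0) fun j k => M j.succ k - M j.succ 0 * M 0 k)
  have hdet : A.det = M.det :=
    Matrix.det_eq_of_forall_row_eq_smul_add_const (Fin.cons 0 fun j => -M j.succ 0) 0 (by simp)
      fun i j => by cases i using Fin.cases <;> simp [A]; ring
  rw [← hdet, Matrix.det_succ_column_zero, Fin.sum_univ_succ]
  simp [A, h]
  rfl

lemma det_add_smul_one {R : Type*} [CommRing R] (M : Matrix κ κ R) (z : R) :
    (M + z • (1 : Matrix κ κ R)).det
      = ∑ s : Finset κ, z ^ #sᶜ * (M.submatrix ((↑) : s → κ) ((↑) : s → κ)).det := by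
  refine (Matrix.detRowAlternating.map_add_univ M.row (z • (1 : Matrix κ κ R)).row).trans
    (sum_congr rfl fun s _ => ?_)
  have hrows : s.piecewise M.row (z • (1 : Matrix κ κ R)).row
      = fun i => (if i ∈ s then (1 : R) else z) • s.piecewise M.row (1 : Matrix κ κ R).row i := by
    ext i j
    by_cases hi : i ∈ s <;> simp [hi]
  rw [← Matrix.det_piecewise_one_eq_submatrix_det, hrows]
  refine (Matrix.detRowAlternating.map_smul_univ _ _).trans ?_
  rw [prod_ite, prod_const_one, one_mul, prod_const, filter_not, filter_mem_eq_inter, univ_inter,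
    ← compl_eq_univ_sdiff, smul_eq_mul]
  rfl

lemma inv_hC_sub_mul {a b y : ℂ} (hc : c ≠ 0) (ha : a - y + c ≠ 0)
    (hb : y - b + c ≠ 0) (hab : a - b + c ≠ 0) :
    (hC c a b)⁻¹ - (hC c a y)⁻¹ * (hC c y b)⁻¹
      = (fC c a y)⁻¹ * ((fC c y b)⁻¹ * (hC c a b)⁻¹) := by
  unfold hC fC
  field_simp
  ring

lemma det_inv_hC_fin (hc : c ≠ 0) : ∀ {n : ℕ} {y : Fin n → ℂ}, Function.Injective y →
    (∀ i j, y i - y j + c ≠ 0) → (Matrix.of fun j k => (hC c (y j) (y k))⁻¹).det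
      = ∏ j, ∏ k, if j = k then 1 else (fC c (y j) (y k))⁻¹ := by
  intro n
  induction n with
  | zero => simp
  | succ n ih =>
    intro y hy hshift
    rw [det_eq_det_sub_mul _ (by simp [hC_self hc])]
    simp only [Matrix.of_apply, inv_hC_sub_mul hc (hshift _ _) (hshift _ _)
      (hshift _ _)]
    refine (Matrix.det_mul_column _ _).trans ?_
    refine (congrArg _ ((Matrix.det_mul_row _ _).trans (congrArg _
      (ih (hy.comp (Fin.succ_injective n)) fun _ _ => hshift _ _)))).trans ?_
    simp only [Fin.prod_univ_succ, Fin.succ_ne_zero, (Fin.succ_ne_zero _).symm, if_true, if_false,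
      one_mul, Fin.succ_inj, prod_mul_distrib, Function.comp_apply]

lemma det_inv_hC (hc : c ≠ 0) {y : κ → ℂ} (hy : Function.Injective y)
    (hshift : ∀ i j, y i - y j + c ≠ 0) :
    (Matrix.of fun j k => (hC c (y j) (y k))⁻¹).det
      = ∏ j, ∏ k ∈ univ.erase j, (fC c (y j) (y k))⁻¹ := by
  have herase : ∀ j, ∏ k ∈ univ.erase j, (fC c (y j) (y k))⁻¹
      = ∏ k, if j = k then 1 else (fC c (y j) (y k))⁻¹ := fun j => by
    rw [prod_ite, prod_const_one, one_mul, filter_ne]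
  let e := (Fintype.equivFin κ).symm
  rw [prod_congr rfl fun j _ => herase j, ← Matrix.det_submatrix_equiv_self e]
  refine (det_inv_hC_fin hc (hy.comp e.injective) fun _ _ => hshift _ _).trans ?_
  simp only [← Equiv.prod_comp e, EmbeddingLike.apply_eq_iff_eq, Function.comp_apply]

lemma det_principal_minor (hc : c ≠ 0) {y : κ → ℂ} (hy : Function.Injective y)
    (hshift : ∀ i j, y i - y j + c ≠ 0) (w : κ → ℂ) (s : Finset κ) :
    (Matrix.of fun j k : s => w j * (∏ i ∈ univ.erase (j : κ), fC c (y j) (y i))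
        * (hC c (y j) (y k))⁻¹).det
      = ∏ j ∈ s, (w j * ∏ k ∈ sᶜ, fC c (y j) (y k)) := by
  have hminor := det_inv_hC hc (y := fun j : s => y j) (hy.comp Subtype.val_injective)
    fun _ _ => hshift _ _
  refine ((Matrix.det_mul_column _ _).trans (congrArg _ hminor)).trans ?_
  rw [← prod_mul_distrib, ← prod_coe_sort s]
  refine prod_congr rfl fun j _ => ?_
  have hsplit : univ.erase (j : κ) = s.erase j ∪ sᶜ := by
    have := j.2
    grind [mem_compl]
  have hne : ∏ k ∈ s.erase j, fC c (y j) (y k) ≠ 0 := prod_ne_zero_iff.2 fun k hk =>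
    div_ne_zero (hshift _ _) (sub_ne_zero.2 fun h => ne_of_mem_erase hk (hy h).symm)
  rw [hsplit, prod_union (disjoint_compl_right.mono_left (erase_subset _ _)),
    prod_inv_distrib]
  have hattach := prod_erase_attach (fun k => fC c (y j) (y k)) j
  rw [attach_eq_univ] at hattach
  simp only [hattach]
  field_simp

lemma KIz_eq_izergin [Fintype ι] {x : ι → ℂ} {y : κ → ℂ} (hc : c ≠ 0) (z : ℂ)
    (hx : Function.Injective x) (hy : Function.Injective y)
    (hshift : ∀ i j, y i - y j + c ≠ 0) :
    KIz c z x y = izergin c z (univ.image x) (univ.image y) := by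
  let D : Matrix κ κ ℂ := Matrix.of fun j k => (∏ i, fC c (x i) (y j)) *
    (∏ i ∈ univ.erase j, fC c (y j) (y i)) * (hC c (y j) (y k))⁻¹
  have hdet : KIz c z x y = (D + (-z) • 1).det := by
    rw [KIz]
    congr 1
    ext j k
    simp [D, Matrix.smul_one_eq_diagonal, Matrix.diagonal_apply, div_eq_mul_inv, add_comm]
  rw [hdet, det_add_smul_one, izergin, sum_powerset_image hy]
  refine sum_congr rfl fun s _ => ?_
  rw [izerginWeight, image_univ_sdiff_image hy, card_image_of_injective _ hy, fprod_image hy hy,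
    fprod_image hx hy, mul_assoc, prod_comm (s := univ), ← prod_mul_distrib]
  simp only [mul_comm (∏ k ∈ sᶜ, fC c _ (y k))]
  exact congrArg _ (det_principal_minor hc hy hshift (fun j => ∏ i, fC c (x i) (y j)) s)

lemma KIz_restr {n m : ℕ} {u : Fin n → ℂ} {v : Fin m → ℂ} (hc : c ≠ 0) (z : ℂ)
    (hu : Function.Injective u) (hv : Function.Injective v) (hshift : ∀ i j, u i - u j + c ≠ 0)
    (s : Finset (Fin m)) (t : Finset (Fin n)) :
    KIz c z (restr v s) (restr u t) = izergin c z (s.image v) (t.image u) := by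
  have himage : ∀ {p : ℕ} (w : Fin p → ℂ) (r : Finset (Fin p)),
      univ.image (restr w r) = r.image w := fun w r => by
    ext
    simp [restr]
  rw [KIz_eq_izergin (x := restr v s) (y := restr u t) hc z (hv.comp Subtype.val_injective)
    (hu.comp Subtype.val_injective) fun _ _ => hshift _ _, himage, himage]

end Determinant

/-! ### Tuples of parameters -/

section Tuples

variable {V ι κ : Type*} [AddCommGroup V] [Module ℂ V] {c : ℂ} {p : ℕ}

lemma opProd_eq_noncommProd {op : ℂ → Module.End ℂ V} (hop : Pairwise (Function.onFun Commute op))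
    {w : Fin p → ℂ} (hw : Function.Injective w) (s : Finset (Fin p)) :
    opProd op w s = (s.image w).noncommProd op (hop.set_pairwise _) := by
  have hlist : s.image w = ((s.sort (· ≤ ·)).map w).toFinset := by
    ext
    simp
  have hprod := noncommProd_toFinset ((s.sort (· ≤ ·)).map w) op (hop.set_pairwise _)
    ((s.sort_nodup _).map hw)
  rw [List.map_map] at hprod
  exact hprod.symm.trans (noncommProd_congr hlist (fun _ _ => rfl) _).symm

lemma univ_image_append {n m : ℕ} (u : Fin n → ℂ) (v : Fin m → ℂ) :
    univ.image (Fin.append u v) = univ.image u ∪ univ.image v := by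
  ext a
  simp [finSumFinEquiv.surjective.exists]

lemma _root_.Generic.injective {w : ι → ℂ} (h : Generic c w) : Function.Injective w :=
  fun i j hij => by_contra fun hne => (h i j hne).1 (sub_eq_zero.2 hij)

lemma _root_.Generic.comp {w : ι → ℂ} (h : Generic c w) {e : κ → ι} (he : Function.Injective e) :
    Generic c (w ∘ e) :=
  fun _ _ hij => h _ _ (he.ne hij)

lemma _root_.Generic.shiftFree [Fintype ι] {w : ι → ℂ} (h : Generic c w) (hc : c ≠ 0) :
    ShiftFree c (univ.image w) := by
  simp only [ShiftFree, forall_mem_image, mem_univ, true_imp_iff]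
  intro i j
  obtain rfl | hij := eq_or_ne i j
  · simpa using hc.symm
  · exact (h i j hij).2.1

lemma _root_.Generic.exists_image_eq [Fintype ι] {w : ι → ℂ} (h : Generic c w) {W : Finset ℂ}
    (hW : W ⊆ univ.image w) : ∃ (p : ℕ) (y : Fin p → ℂ), Generic c y ∧ univ.image y = W := by
  classical
  obtain ⟨s, -, rfl⟩ := subset_image_iff.1 hW
  refine ⟨#s, w ∘ (↑) ∘ s.equivFin.symm,
    h.comp (Subtype.val_injective.comp s.equivFin.symm.injective), ?_⟩
  rw [← image_image, ← image_image, image_univ_equiv, univ_eq_attach, attach_image_val]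

lemma fSS_eq_fprod {w : Fin p → ℂ} (hw : Function.Injective w) (s t : Finset (Fin p)) :
    fSS c w s t = fprod c (s.image w) (t.image w) := (fprod_image hw hw s t).symm

lemma partitionSum_image {w : Fin p → ℂ} (hw : Function.Injective w) (k₁ k₂ : ℂ) (q₁ q₂ : ℂ → ℂ)
    (H : Finset ℂ → Finset ℂ → ℂ) :
    partitionSum c (k₁ • q₁) (k₂ • q₂) H (univ.image w)
      = ∑ s : Finset (Fin p), k₁ ^ #s * k₂ ^ #sᶜ * (∏ i ∈ s, q₁ (w i)) * (∏ i ∈ sᶜ, q₂ (w i))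
          * fSS c w s sᶜ * H (s.image w) (sᶜ.image w) := by
  rw [partitionSum, sum_powerset_image hw]
  refine sum_congr rfl fun s _ => ?_
  rw [image_univ_sdiff_image hw, fSS_eq_fprod hw, prod_image hw.injOn, prod_image hw.injOn]
  simp only [Pi.smul_apply, smul_eq_mul, prod_mul_distrib, prod_const]
  ring

lemma pow_eq_pow_card_mul_pow_card_compl {M : Type*} [Monoid M] (x : M) (s : Finset (Fin p)) :
    x ^ p = x ^ #s * x ^ #sᶜ := by
  rw [← pow_add, card_add_card_compl, Fintype.card_fin]

lemma izerginKorepinSum_empty_image {w : Fin p → ℂ} (hw : Function.Injective w) (β₁ β₂ μ : ℂ)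
    (l₁ l₂ : ℂ → ℂ) :
    izerginKorepinSum c β₁ β₂ μ l₁ l₂ ∅ (univ.image w)
      = (1 - μ) ^ p * ∑ s : Finset (Fin p), (-β₁) ^ (-(#s : ℤ)) * (-β₂) ^ (-(#sᶜ : ℤ)) *
          (∏ i ∈ s, l₂ (w i)) * (∏ i ∈ sᶜ, l₁ (w i)) * fSS c w s sᶜ := by
  rw [izerginKorepinSum_empty_left, partitionSum_image hw, mul_sum]
  refine sum_congr rfl fun s _ => ?_
  rw [pow_eq_pow_card_mul_pow_card_compl (1 - μ) s]
  simp only [zpow_neg, zpow_natCast, mul_pow, inv_pow]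
  ring

lemma izerginKorepinSum_image {n m : ℕ} {u : Fin n → ℂ} {v : Fin m → ℂ} {β₁ β₂ μ : ℂ}
    (hc : c ≠ 0) (hβ₁ : β₁ ≠ 0) (hβ₂ : β₂ ≠ 0) (hμ : μ ≠ 1) (hu : Function.Injective u)
    (hv : Function.Injective v) (hshift : ShiftFree c (univ.image u)) (l₁ l₂ : ℂ → ℂ) :
    izerginKorepinSum c β₁ β₂ μ l₁ l₂ (univ.image u) (univ.image v)
      = μ ^ (2 * n) * (1 - μ) ^ ((m : ℤ) - (n : ℤ)) *
          ∑ s : Finset (Fin n), ∑ t : Finset (Fin m),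
            (-β₁) ^ ((#sᶜ : ℤ) - (#tᶜ : ℤ)) * (-β₂) ^ ((#s : ℤ) - (#t : ℤ)) *
              (∏ i ∈ s, l₂ (u i)) * (∏ j ∈ tᶜ, l₂ (v j)) *
              (∏ i ∈ sᶜ, l₁ (u i)) * (∏ j ∈ t, l₁ (v j)) *
              fSS c u s sᶜ * fSS c v tᶜ t *
              KIz c μ⁻¹ (restr v tᶜ) (restr u sᶜ) * KIzBar c μ⁻¹ (restr v t) (restr u s) := by
  have hK := fun s t => KIz_restr hc μ⁻¹ hu hv
    (fun i j => hshift.sub_add_ne_zero (mem_image_of_mem u (mem_univ i))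
      (mem_image_of_mem u (mem_univ j))) s t
  have hKbar := fun s t => KIz_restr (neg_ne_zero.2 hc) μ⁻¹ hu hv
    (fun i j => hshift.neg.sub_add_ne_zero (mem_image_of_mem u (mem_univ i))
      (mem_image_of_mem u (mem_univ j))) s t
  rw [izerginKorepinSum, partitionSum_image hu, mul_sum]
  refine sum_congr rfl fun s _ => ?_
  rw [bilinearKernel, ← neg_neg c, partitionSum_neg, neg_neg, partitionSum_image hv, mul_sum,
    mul_sum]
  refine sum_congr rfl fun t _ => ?_
  rw [KIzBar, hK, hKbar, fSS_eq_fprod hv, fprod_neg, ← fSS_eq_fprod hv,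
    zpow_sub₀ (sub_ne_zero.2 hμ.symm), zpow_sub₀ (neg_ne_zero.2 hβ₁),
    zpow_sub₀ (neg_ne_zero.2 hβ₂), pow_mul]
  simp only [zpow_natCast]
  rw [pow_eq_pow_card_mul_pow_card_compl (μ ^ 2) s, pow_eq_pow_card_mul_pow_card_compl (1 - μ) s,
    pow_eq_pow_card_mul_pow_card_compl (1 - μ) t]
  simp only [div_eq_mul_inv, mul_inv, mul_pow, inv_pow]
  ring

end Tuples

end ModifiedBethe

open ModifiedBethe Finset

/-- Modified Izergin--Korepin formula for the scalar product of modified Bethe vectors. -/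
theorem stmt7
    (c : ℂ) (hc : c ≠ 0) (β1 β2 μ : ℂ) (hβ1 : β1 ≠ 0) (hβ2 : β2 ≠ 0)
    (hμ0 : μ ≠ 0) (hμ1 : μ ≠ 1)
    (V : Type*) [AddCommGroup V] [Module ℂ V]
    (N : Fin 2 → Fin 2 → ℂ → Module.End ℂ V)
    (vac : V) (lam1 lam2 : ℂ → ℂ) (vacDual : V →ₗ[ℂ] ℂ)
    (hYang : ∀ (i j k l : Fin 2) (x y : ℂ), x ≠ y →
      N i j x * N k l y - N k l y * N i j x
        = gC c x y • (N k j y * N i l x - N k j x * N i l y))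
    (hCommSame : ∀ (i j : Fin 2) (x y : ℂ), N i j x * N i j y = N i j y * N i j x)
    (hvac11 : ∀ x : ℂ, N 0 0 x vac = lam1 x • vac + β2 • (N 0 1 x vac))
    (hvac22 : ∀ x : ℂ, N 1 1 x vac = lam2 x • vac + β1 • (N 0 1 x vac))
    (hvac21 : ∀ x : ℂ, N 1 0 x vac
      = (β1 * lam1 x + β2 * lam2 x) • vac + (β1 * β2) • (N 0 1 x vac))
    (hnorm : vacDual vac = 1)
    (hAvg : ∀ (p : ℕ) (w : Fin p → ℂ), Generic c w →
      vacDual (opProd (N 0 1) w Finset.univ vac)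
        = (1 - μ) ^ p * ∑ s : Finset (Fin p),
            (-β1) ^ (-(s.card : ℤ)) * (-β2) ^ (-(sᶜ.card : ℤ)) *
              (∏ i ∈ s, lam2 (w i)) * (∏ i ∈ sᶜ, lam1 (w i)) * fSS c w s sᶜ)
    (n m : ℕ) (u : Fin n → ℂ) (v : Fin m → ℂ)
    (hgen : Generic c (Fin.append u v)) :
    vacDual ((opProd (N 1 0) u Finset.univ * opProd (N 0 1) v Finset.univ) vac)
      = μ ^ (2 * n) * (1 - μ) ^ ((m : ℤ) - (n : ℤ)) *
          ∑ sU : Finset (Fin n), ∑ sV : Finset (Fin m),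
            (-β1) ^ ((sUᶜ.card : ℤ) - (sVᶜ.card : ℤ)) *
              (-β2) ^ ((sU.card : ℤ) - (sV.card : ℤ)) *
              (∏ i ∈ sU, lam2 (u i)) * (∏ j ∈ sVᶜ, lam2 (v j)) *
              (∏ i ∈ sUᶜ, lam1 (u i)) * (∏ j ∈ sV, lam1 (v j)) *
              fSS c u sU sUᶜ * fSS c v sVᶜ sV *
              KIz c μ⁻¹ (restr v sVᶜ) (restr u sUᶜ) *
              KIzBar c μ⁻¹ (restr v sV) (restr u sU) := by
  have hcomm : ∀ i j, Pairwise (Function.onFun Commute (N i j)) :=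
    fun i j x y _ => hCommSame i j x y
  obtain ⟨hu, hv, huv⟩ := Fin.append_injective_iff.1 hgen.injective
  have hΩ := hgen.shiftFree hc
  have hdisj : Disjoint (univ.image u) (univ.image v) := by
    simpa [disjoint_left] using fun i j => (huv i j).symm
  have hB : IsBetheFamily c β1 β2 N lam1 lam2
      fun W => W.noncommProd (N 0 1) ((hcomm 0 1).set_pairwise _) vac :=
    ⟨hYang, fun a W ha => by simp [ha], by simpa using hvac11, by simpa using hvac22,
      by simpa using hvac21⟩
  have havg : ∀ W ⊆ univ.image (Fin.append u v),
      vacDual (W.noncommProd (N 0 1) ((hcomm 0 1).set_pairwise _) vac)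
        = izerginKorepinSum c β1 β2 μ lam1 lam2 ∅ W := by
    intro W hW
    obtain ⟨p, w, hw, rfl⟩ := hgen.exists_image_eq hW
    rw [← opProd_eq_noncommProd (hcomm 0 1) hw.injective, hAvg p w hw,
      izerginKorepinSum_empty_image hw.injective]
  rw [univ_image_append] at hΩ havg
  rw [← izerginKorepinSum_image hc hβ1 hβ2 hμ1 hu hv (hΩ.mono subset_union_left),
    opProd_eq_noncommProd (hcomm 1 0) hu, opProd_eq_noncommProd (hcomm 0 1) hv]
  exact hB.scalarProduct_eq (C := fun U => U.noncommProd (N 1 0) ((hcomm 1 0).set_pairwise _)) hc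
    hβ1 hβ2 hμ0 hμ1 (noncommProd_empty _ _) (fun a U ha => noncommProd_insert_of_notMem' U a _ _ ha)
    vacDual hΩ havg subset_union_left subset_union_right hdisj
end
end

section
/- Assume μ = 1 and m = n. Then for generic tuples ū, v̄ of length n the modified scalar product reduces to the ordinary one: ⟨0|( ν_{21}(ū) ν_{12}(v̄) |0⟩ ) = Σ_{ξ̄ ⇒ {ξ̄_I, ξ̄_II}, #ξ̄_I = #ξ̄_II = n} λ_2(ξ̄_I)·λ_1(ξ̄_II)·f(ξ̄_I, ξ̄_II)·K_n(ū | ξ̄_I + c)·\bar{K}_n(ū | ξ̄_II − c), where ξ̄ = {ū, v̄} and the sum runs over all partitions of ξ̄ into two disjoint n-element subtuples. -/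
open scoped BigOperators

noncomputable section

/-! Multiplying the monodromy matrix `T` by lower unitriangular matrices, `L T R`, preserves the
Yangian relations and turns the modified vacuum into an ordinary highest weight vector for the
entries `A, B, C, D` of `L T R`; moreover `ν₁₂ = B` and `ν₂₁ = C + β₁ A + β₂ D + β₁ β₂ B`. For
`μ = 1` the dual vacuum kills every nonempty Bethe vector `B(w̄_S)|0⟩`. Hence, by induction on `#T`,
`⟨0| ν₂₁(w̄_T) B(w̄_S) |0⟩` vanishes when `#T < #S`, and when `#T = #S` only `C` contributes to the
action of the last factor `ν₂₁`.

The action of `C` on a Bethe vector is the `ε`-part of the action of `A + ε C` on the product of the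
`B + ε D` over the dual numbers, where the `A`-`B` exchange relation still holds. It moves two
parameters `w_a`, `w_e` from the Bethe vector into the weights `λ₂`, `λ₁`. Expanding both Izergin
determinants in the Izergin-Korepin sum with respect to the same entry of `ū` gives a sum over the
same pairs with the same coefficients, so both sides satisfy one recursion. -/

section ScalarIdentities

lemma fC_eq_one_add_gC (c : ℂ) {x y : ℂ} (h : x ≠ y) : fC c x y = 1 + gC c x y := by
  have hsub := sub_ne_zero.mpr h
  unfold fC gC
  field_simp

lemma fC_neg (c x y : ℂ) : fC (-c) x y = fC c y x := by
  unfold fC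
  rw [← neg_div_neg_eq]
  congr 1 <;> ring

lemma gC_neg (c x y : ℂ) : gC (-c) x y = gC c y x := by
  unfold gC
  rw [← neg_div_neg_eq, neg_neg, neg_sub]

lemma hC_neg (c x y : ℂ) : hC (-c) x y = hC c y x := by
  unfold hC
  rw [← neg_div_neg_eq]
  congr 1 <;> ring

lemma gC_swap (c x y : ℂ) : gC c x y = -gC c y x := by
  unfold gC
  rw [← neg_sub, div_neg]

lemma hC_self {c : ℂ} (hc : c ≠ 0) (x : ℂ) : hC c x x = 1 := by
  simp [hC, hc]

lemma inv_hC_mul_fC {c x y : ℂ} (h : x - y + c ≠ 0) : (hC c x y)⁻¹ * fC c x y = gC c x y := by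
  rw [hC, fC, gC, inv_div, div_mul_div_cancel₀ h]

lemma gC_sub_self_left (c x y : ℂ) : gC c (x - c) y = -(hC c y x)⁻¹ := by
  rw [gC, hC, inv_div, ← div_neg]
  congr 1
  ring

lemma fC_mul_one_sub_inv_hC {c x y : ℂ} (hxy : x ≠ y) (h : x - y + c ≠ 0) :
    fC c x y * (1 - (hC c x y)⁻¹) = 1 := by
  linear_combination fC_eq_one_add_gC c hxy - inv_hC_mul_fC h

lemma fC_sub_mul_fC {c x y : ℂ} (hxy : x ≠ y) (h : y - x + c ≠ 0) :
    fC c (x - c) y * fC c y x = 1 := by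
  have h₁ := sub_ne_zero.mpr hxy.symm
  have h₂ : x - c - y ≠ 0 := fun h' => h (by linear_combination -h')
  unfold fC
  field_simp
  ring

lemma fC_mul_gC_add_gC_mul_gC (c : ℂ) {x y z : ℂ} (hxy : x ≠ y) (hyz : y ≠ z) (hxz : x ≠ z) :
    fC c x y * gC c y z + gC c y x * gC c x z = gC c y z * fC c x z := by
  have h₁ := sub_ne_zero.mpr hxy
  have h₂ := sub_ne_zero.mpr hyz
  have h₃ := sub_ne_zero.mpr hxz
  rw [gC_swap c y x]
  unfold fC gC
  field_simp
  ring

end ScalarIdentities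

section ProdF

variable {ι : Type*} (c : ℂ) (w : ι → ℂ)

/-- The double product `f(w̄_S, w̄_T)` over two finite sets of indices; this is `fSS` for an
arbitrary index type. -/
def prodF (S T : Finset ι) : ℂ :=
  ∏ i ∈ S, ∏ j ∈ T, fC c (w i) (w j)

@[simp]
lemma prodF_empty_left (T : Finset ι) : prodF c w ∅ T = 1 := by
  simp [prodF]

lemma prodF_singleton_left (a : ι) (T : Finset ι) :
    prodF c w {a} T = ∏ j ∈ T, fC c (w a) (w j) := by
  simp [prodF]

lemma prodF_singleton_right (S : Finset ι) (a : ι) :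
    prodF c w S {a} = ∏ i ∈ S, fC c (w i) (w a) := by
  simp [prodF]

lemma prodF_neg (S T : Finset ι) : prodF (-c) w S T = prodF c w T S := by
  simp only [prodF, fC_neg]
  exact Finset.prod_comm

variable [DecidableEq ι]

lemma prodF_insert_left {a : ι} {S : Finset ι} (ha : a ∉ S) (T : Finset ι) :
    prodF c w (insert a S) T = prodF c w {a} T * prodF c w S T := by
  simp [prodF, Finset.prod_insert ha]

lemma prodF_insert_right {a : ι} {T : Finset ι} (ha : a ∉ T) (S : Finset ι) :
    prodF c w S (insert a T) = prodF c w S {a} * prodF c w S T := by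
  simp [prodF, Finset.prod_insert ha, Finset.prod_mul_distrib]

lemma prodF_singleton_mul_erase_left {a : ι} {S : Finset ι} (ha : a ∈ S) (T : Finset ι) :
    prodF c w {a} T * prodF c w (S.erase a) T = prodF c w S T := by
  rw [← prodF_insert_left c w (Finset.notMem_erase a S), Finset.insert_erase ha]

lemma prodF_singleton_mul_erase_right {a : ι} {T : Finset ι} (ha : a ∈ T) (S : Finset ι) :
    prodF c w S {a} * prodF c w S (T.erase a) = prodF c w S T := by
  rw [← prodF_insert_right c w (Finset.notMem_erase a T), Finset.insert_erase ha]

lemma prodF_mul_sdiff_right {T Y : Finset ι} (hT : T ⊆ Y) (S : Finset ι) :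
    prodF c w S T * prodF c w S (Y \ T) = prodF c w S Y := by
  simp only [prodF, ← Finset.prod_mul_distrib, mul_comm (∏ _ ∈ T, _), Finset.prod_sdiff hT]

lemma prodF_mul_prodF_erase_mul_prodF_erase {I J : Finset ι} (hIJ : Disjoint I J) {a e : ι}
    (ha : a ∈ I) (he : e ∈ J) :
    prodF c w I J * prodF c w {a} (I.erase a) * prodF c w (J.erase e) {e}
      = fC c (w a) (w e) * prodF c w {a} (I.erase a ∪ J.erase e) *
        prodF c w (I.erase a ∪ J.erase e) {e} * prodF c w (I.erase a) (J.erase e) := by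
  have hdisj : Disjoint (I.erase a) (J.erase e) :=
    hIJ.mono (Finset.erase_subset a I) (Finset.erase_subset e J)
  rw [← prodF_singleton_mul_erase_left c w ha, ← prodF_singleton_mul_erase_right c w he {a},
    ← prodF_singleton_mul_erase_right c w he (I.erase a)]
  simp only [prodF_singleton_left, prodF_singleton_right, Finset.prod_union hdisj,
    Finset.prod_singleton]
  ring

variable {w}

lemma gC_mul_prodF_insert_erase (hw : w.Injective) {t r a : ι} {S : Finset ι} (htr : t ≠ r)
    (hta : t ≠ a) (hr : r ∉ S) (ha : a ∈ S) :
    gC c (w t) (w a) * prodF c w ((insert r S).erase a) {a}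
      = fC c (w r) (w t) * gC c (w t) (w a) * prodF c w (S.erase a) {a}
        + gC c (w t) (w r) * gC c (w r) (w a) * prodF c w (S.erase a) {a} := by
  have hra : r ≠ a := fun h => hr (h ▸ ha)
  rw [Finset.erase_insert_of_ne hra, prodF_insert_left c w (by simp [hr]),
    prodF_singleton_left, Finset.prod_singleton]
  linear_combination -prodF c w (S.erase a) {a} *
    fC_mul_gC_add_gC_mul_gC c (hw.ne htr.symm) (hw.ne hta) (hw.ne hra)

theorem prod_fC_eq_one_add_sum (hw : w.Injective) (R : Finset ι) {t : ℂ}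
    (ht : ∀ a ∈ R, t ≠ w a) :
    ∏ a ∈ R, fC c t (w a) = 1 + ∑ a ∈ R, gC c t (w a) * prodF c w {a} (R.erase a) := by
  induction R using Finset.induction_on generalizing t with
  | empty => simp
  | insert r R hr ih =>
    have htr : t ≠ w r := ht r (Finset.mem_insert_self r R)
    have htR : ∀ a ∈ R, t ≠ w a := fun a ha => ht a (Finset.mem_insert_of_mem ha)
    have hrR : ∀ a ∈ R, w r ≠ w a := fun a ha h => hr (hw h ▸ ha)
    have split_pole : ∀ a ∈ R, gC c t (w a) * prodF c w {a} ((insert r R).erase a)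
        = fC c t (w r) * (gC c t (w a) * prodF c w {a} (R.erase a))
          - gC c t (w r) * (gC c (w r) (w a) * prodF c w {a} (R.erase a)) := by
      intro a ha
      have hra : r ≠ a := fun h => hr (h ▸ ha)
      have three_term := fC_mul_gC_add_gC_mul_gC (-c) htr.symm (htR a ha) (hrR a ha)
      simp only [fC_neg, gC_neg] at three_term
      rw [gC_swap c (w a) t, gC_swap c (w r) t, gC_swap c (w a) (w r)] at three_term
      rw [Finset.erase_insert_of_ne hra, prodF_insert_right c w (by simp [hr]),
        prodF_singleton_left, Finset.prod_singleton]
      linear_combination prodF c w {a} (R.erase a) * three_term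
    rw [Finset.prod_insert hr, Finset.sum_insert hr, Finset.erase_insert hr, prodF_singleton_left,
      ih htR, ih hrR, Finset.sum_congr rfl split_pole, Finset.sum_sub_distrib, ← Finset.mul_sum,
      ← Finset.mul_sum, fC_eq_one_add_gC c htr]
    ring

theorem prod_fC_eq_one_add_sum' (hw : w.Injective) (R : Finset ι) {t : ℂ}
    (ht : ∀ a ∈ R, t ≠ w a) :
    ∏ a ∈ R, fC c (w a) t = 1 + ∑ a ∈ R, gC c (w a) t * prodF c w (R.erase a) {a} := by
  simpa only [fC_neg, gC_neg, prodF_neg] using prod_fC_eq_one_add_sum (-c) hw R ht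

theorem prodF_insert_right_eq_sub_sum (hw : w.Injective) {y : ι} {S Y : Finset ι} (hyS : y ∉ S)
    (hyY : y ∉ Y) :
    prodF c w S (insert y Y) = prodF c w S Y - ∑ a ∈ S, gC c (w y) (w a) *
      (prodF c w (S.erase a) {a} * prodF c w {a} Y * prodF c w (S.erase a) Y) := by
  have residue : ∀ a ∈ S, gC c (w y) (w a) *
        (prodF c w (S.erase a) {a} * prodF c w {a} Y * prodF c w (S.erase a) Y)
      = -(gC c (w a) (w y) * prodF c w (S.erase a) {a} * prodF c w S Y) := fun a ha => by
    rw [← prodF_singleton_mul_erase_left c w ha Y, gC_swap]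
    ring
  rw [prodF_insert_right c w hyY, prodF_singleton_right,
    prod_fC_eq_one_add_sum' c hw S fun a ha => hw.ne (ne_of_mem_of_not_mem ha hyS).symm,
    Finset.sum_congr rfl residue, Finset.sum_neg_distrib, ← Finset.sum_mul]
  ring

theorem prodF_insert_left_eq_add_sum (hw : w.Injective) {y : ι} {S Y : Finset ι} (hyS : y ∉ S)
    (hyY : y ∉ Y) :
    prodF c w (insert y S) Y = prodF c w S Y + ∑ a ∈ Y, gC c (w y) (w a) *
      (prodF c w S {a} * prodF c w {a} (Y.erase a) * prodF c w S (Y.erase a)) := by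
  have residue : ∀ a ∈ Y, gC c (w y) (w a) *
        (prodF c w S {a} * prodF c w {a} (Y.erase a) * prodF c w S (Y.erase a))
      = gC c (w y) (w a) * prodF c w {a} (Y.erase a) * prodF c w S Y := fun a ha => by
    rw [← prodF_singleton_mul_erase_right c w ha S]
    ring
  rw [prodF_insert_left c w hyS, prodF_singleton_left,
    prod_fC_eq_one_add_sum c hw Y fun a ha => hw.ne (ne_of_mem_of_not_mem ha hyY).symm,
    Finset.sum_congr rfl residue, ← Finset.sum_mul]
  ring

end ProdF

section SubsetSums

variable {ι M : Type*} [DecidableEq ι] [AddCommMonoid M]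

lemma erase_sdiff_erase_of_mem {a : ι} {S : Finset ι} (ha : a ∈ S) (Y : Finset ι) :
    Y.erase a \ S.erase a = Y \ S := by
  grind

theorem sum_powerset_sum_mem (X : Finset ι) (F : ι → Finset ι → M) :
    ∑ S ∈ X.powerset, ∑ a ∈ S, F a (S.erase a)
      = ∑ a ∈ X, ∑ S ∈ (X.erase a).powerset, F a S := by
  rw [Finset.sum_sigma', Finset.sum_sigma']
  refine Finset.sum_bij' (fun p _ => ⟨p.2, p.1.erase p.2⟩) (fun p _ => ⟨insert p.1 p.2, p.1⟩)
    ?_ ?_ ?_ ?_ ?_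
  all_goals simp only [Finset.mem_sigma, Finset.mem_powerset]
  · exact fun p hp => ⟨hp.1 hp.2, Finset.erase_subset_erase _ hp.1⟩
  · exact fun p hp => ⟨Finset.insert_subset hp.1 (hp.2.trans (Finset.erase_subset _ _)),
      Finset.mem_insert_self _ _⟩
  · exact fun p hp => by rw [Finset.insert_erase hp.2]
  · exact fun p hp => by
      rw [Finset.erase_insert fun h => Finset.notMem_erase p.1 X (hp.2 h)]
  · exact fun _ _ => trivial

theorem sum_powerset_sum_notMem (X : Finset ι) (F : ι → Finset ι → M) :
    ∑ S ∈ X.powerset, ∑ a ∈ X \ S, F a S = ∑ a ∈ X, ∑ S ∈ (X.erase a).powerset, F a S := by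
  refine Finset.sum_comm' fun S a => ?_
  simp only [Finset.mem_powerset, Finset.mem_sdiff, Finset.subset_erase]
  tauto

theorem sum_powersetCard_sum_mem (X : Finset ι) (k : ℕ) (F : ι → Finset ι → M) :
    ∑ S ∈ X.powersetCard (k + 1), ∑ a ∈ S, F a (S.erase a)
      = ∑ a ∈ X, ∑ S ∈ (X.erase a).powersetCard k, F a S := by
  simp only [Finset.powersetCard_eq_filter, Finset.sum_filter]
  rw [← sum_powerset_sum_mem]
  refine Finset.sum_congr rfl fun S _ => ?_
  have card_erase : ∀ a ∈ S, ((S.erase a).card = k ↔ S.card = k + 1) := fun a ha => by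
    rw [← Finset.card_erase_add_one ha, Nat.add_right_cancel_iff]
  rw [Finset.sum_congr rfl fun a ha => if_congr (card_erase a ha) rfl rfl]
  split_ifs <;> simp

theorem sum_powersetCard_sum_notMem (X : Finset ι) (k : ℕ) (F : ι → Finset ι → M) :
    ∑ S ∈ X.powersetCard k, ∑ a ∈ X \ S, F a S
      = ∑ a ∈ X, ∑ S ∈ (X.erase a).powersetCard k, F a S := by
  refine Finset.sum_comm' fun S a => ?_
  simp only [Finset.mem_powersetCard, Finset.mem_sdiff, Finset.subset_erase]
  tauto

end SubsetSums

section IzerginSum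

variable {ι : Type*} [DecidableEq ι] (c z : ℂ) (w : ι → ℂ)

/-- The expansion of the modified Izergin determinant over subsets of its second tuple, with the
products `f(x̄, y_a)` replaced by arbitrary weights `φ a`; see `KIz_eq_izerginSum`. -/
def izerginSum (φ : ι → ℂ) (Y : Finset ι) : ℂ :=
  ∑ S ∈ Y.powerset, (-z) ^ (Y \ S).card * (∏ a ∈ S, φ a) * prodF c w S (Y \ S)

theorem izerginSum_map {κ : Type*} [DecidableEq κ] (φ : ι → ℂ) (e : κ ↪ ι) (Y : Finset κ) :
    izerginSum c z w φ (Y.map e) = izerginSum c z (w ∘ e) (φ ∘ e) Y := by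
  rw [izerginSum, Finset.map_eq_image, Finset.powerset_image,
    Finset.sum_image (Finset.image_injective e.injective).injOn]
  simp only [← Finset.map_eq_image, ← Finset.map_sdiff, Finset.card_map, Finset.prod_map, prodF]
  rfl

variable {w}

theorem izerginSum_one (hw : w.Injective) (Y : Finset ι) :
    izerginSum c z w 1 Y = (1 - z) ^ Y.card := by
  induction Y using Finset.induction_on with
  | empty => simp [izerginSum]
  | insert y Z hy ih =>
    simp only [izerginSum, Pi.one_apply, Finset.prod_const_one, mul_one] at ih ⊢
    let R (a : ι) (S : Finset ι) : ℂ := gC c (w y) (w a) * ((-z) ^ ((Z.erase a) \ S).card *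
      (prodF c w S {a} * prodF c w {a} ((Z.erase a) \ S) * prodF c w S ((Z.erase a) \ S)))
    have without_y : ∀ S ∈ Z.powerset,
        (-z) ^ (insert y Z \ S).card * prodF c w S (insert y Z \ S)
          = -z * ((-z) ^ (Z \ S).card * prodF c w S (Z \ S)) + z * ∑ a ∈ S, R a (S.erase a) := by
      intro S hS
      have hyS : y ∉ S := fun h => hy (Finset.mem_powerset.mp hS h)
      have hyc : y ∉ Z \ S := fun h => hy (Finset.mem_sdiff.mp h).1
      have residue : ∀ a ∈ S, R a (S.erase a) = (-z) ^ (Z \ S).card * (gC c (w y) (w a) *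
          (prodF c w (S.erase a) {a} * prodF c w {a} (Z \ S) * prodF c w (S.erase a) (Z \ S))) :=
        fun a ha => by simp only [R, erase_sdiff_erase_of_mem ha, mul_left_comm]
      rw [Finset.insert_sdiff_of_notMem Z hyS, Finset.card_insert_of_notMem hyc, pow_succ,
        prodF_insert_right_eq_sub_sum c hw hyS hyc, Finset.sum_congr rfl residue, ← Finset.mul_sum]
      ring
    have with_y : ∀ S ∈ Z.powerset,
        (-z) ^ (insert y Z \ insert y S).card * prodF c w (insert y S) (insert y Z \ insert y S)
          = (-z) ^ (Z \ S).card * prodF c w S (Z \ S) - z * ∑ a ∈ Z \ S, R a S := by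
      intro S hS
      have hyS : y ∉ S := fun h => hy (Finset.mem_powerset.mp hS h)
      have hyc : y ∉ Z \ S := fun h => hy (Finset.mem_sdiff.mp h).1
      have residue : ∀ a ∈ Z \ S, -z * R a S = (-z) ^ (Z \ S).card * (gC c (w y) (w a) *
          (prodF c w S {a} * prodF c w {a} ((Z \ S).erase a) *
            prodF c w S ((Z \ S).erase a))) := fun a ha => by
        rw [← Finset.card_erase_add_one ha, ← Finset.erase_sdiff_comm]
        ring
      rw [Finset.insert_sdiff_insert, Finset.sdiff_insert_of_notMem hy,
        prodF_insert_left_eq_add_sum c hw hyS hyc, mul_add, Finset.mul_sum,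
        ← Finset.sum_congr rfl residue, ← Finset.mul_sum]
      ring
    rw [Finset.sum_powerset_insert hy, Finset.sum_congr rfl without_y,
      Finset.sum_congr rfl with_y, Finset.sum_add_distrib, Finset.sum_sub_distrib,
      ← Finset.mul_sum, ← Finset.mul_sum, ← Finset.mul_sum, sum_powerset_sum_mem Z R,
      sum_powerset_sum_notMem Z R, ih, Finset.card_insert_of_notMem hy, pow_succ]
    ring

theorem izerginSum_fC_mul (hw : w.Injective) (φ : ι → ℂ) {ξ : ℂ} {Y : Finset ι}
    (hξ : ∀ a ∈ Y, ξ ≠ w a) :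
    izerginSum c z w (fun a => fC c ξ (w a) * φ a) Y
      = izerginSum c z w φ Y + ∑ a ∈ Y, gC c ξ (w a) * φ a * prodF c w {a} (Y.erase a) *
          izerginSum c z w φ (Y.erase a) := by
  let term (Z S : Finset ι) : ℂ :=
    (-z) ^ (Z \ S).card * (∏ a ∈ S, φ a) * prodF c w S (Z \ S)
  have expand : ∀ S ∈ Y.powerset,
      (-z) ^ (Y \ S).card * (∏ a ∈ S, fC c ξ (w a) * φ a) * prodF c w S (Y \ S)
        = term Y S + ∑ a ∈ S,
            gC c ξ (w a) * φ a * prodF c w {a} (Y.erase a) * term (Y.erase a) (S.erase a) := by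
    intro S hS
    have hSY := Finset.mem_powerset.mp hS
    rw [Finset.prod_mul_distrib, prod_fC_eq_one_add_sum c hw S fun a ha => hξ a (hSY ha),
      add_mul, one_mul, mul_add, add_mul, Finset.sum_mul, Finset.mul_sum, Finset.sum_mul]
    refine congrArg _ (Finset.sum_congr rfl fun a ha => ?_)
    simp only [term, erase_sdiff_erase_of_mem ha]
    rw [← Finset.mul_prod_erase S φ ha, ← prodF_singleton_mul_erase_left c w ha (Y \ S),
      ← prodF_mul_sdiff_right c w (Finset.erase_subset_erase a hSY), erase_sdiff_erase_of_mem ha]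
    ring
  rw [izerginSum, Finset.sum_congr rfl expand, Finset.sum_add_distrib,
    sum_powerset_sum_mem Y fun a S =>
      gC c ξ (w a) * φ a * prodF c w {a} (Y.erase a) * term (Y.erase a) S]
  simp only [izerginSum, Finset.mul_sum, term]

end IzerginSum

section IzerginK

variable {ι κ : Type*} [DecidableEq ι] (c : ℂ) (x : κ → ℂ) (w : ι → ℂ)

/-- The ordinary Izergin determinant `K(x̄_T | w̄_Y)`, in its expansion over subsets of `Y`; see
`KIz_restr`. -/
def izerginK (T : Finset κ) (Y : Finset ι) : ℂ :=
  izerginSum c 1 w (fun a => ∏ i ∈ T, fC c (x i) (w a)) Y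

@[simp]
lemma izerginK_empty : izerginK c x w ∅ ∅ = 1 := by
  simp [izerginK, izerginSum]

variable {x w}

lemma izerginK_insert_eq_add [DecidableEq κ] (hw : w.Injective) {T : Finset κ} {Y : Finset ι}
    {t : κ} (ht : t ∉ T) (htY : ∀ a ∈ Y, x t ≠ w a) :
    izerginK c x w (insert t T) Y = izerginK c x w T Y + ∑ a ∈ Y,
      gC c (x t) (w a) * (∏ i ∈ T, fC c (x i) (w a)) * prodF c w {a} (Y.erase a) *
        izerginK c x w T (Y.erase a) := by
  simp only [izerginK, Finset.prod_insert ht]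
  exact izerginSum_fC_mul c 1 hw _ htY

theorem izerginK_eq_zero_of_card_lt (hw : w.Injective) {T : Finset κ} {Y : Finset ι}
    (hx : ∀ i ∈ T, ∀ a ∈ Y, x i ≠ w a) (hcard : T.card < Y.card) : izerginK c x w T Y = 0 := by
  classical
  induction T using Finset.induction_on generalizing Y with
  | empty =>
    have hone : izerginK c x w ∅ Y = (1 - 1) ^ Y.card := izerginSum_one c 1 hw Y
    rw [hone, sub_self, zero_pow hcard.ne']
  | insert t T ht ih =>
    rw [Finset.card_insert_of_notMem ht] at hcard
    have hxT : ∀ i ∈ T, ∀ a ∈ Y, x i ≠ w a := fun i hi => hx i (Finset.mem_insert_of_mem hi)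
    rw [izerginK_insert_eq_add c hw ht (hx t (Finset.mem_insert_self t T)),
      ih hxT (by lia), zero_add]
    refine Finset.sum_eq_zero fun a ha => ?_
    rw [ih (fun i hi b hb => hxT i hi b (Finset.mem_of_mem_erase hb))
      (by rw [Finset.card_erase_of_mem ha]; lia), mul_zero]

theorem izerginK_insert [DecidableEq κ] (hw : w.Injective) {T : Finset κ} {Y : Finset ι}
    {t : κ} (ht : t ∉ T) (hx : ∀ i ∈ insert t T, ∀ a ∈ Y, x i ≠ w a) (hcard : Y.card = T.card + 1) :
    izerginK c x w (insert t T) Y = ∑ a ∈ Y,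
      gC c (x t) (w a) * (∏ i ∈ T, fC c (x i) (w a)) * prodF c w {a} (Y.erase a) *
        izerginK c x w T (Y.erase a) := by
  rw [izerginK_insert_eq_add c hw ht (hx t (Finset.mem_insert_self t T)),
    izerginK_eq_zero_of_card_lt c hw (fun i hi => hx i (Finset.mem_insert_of_mem hi)) (by lia),
    zero_add]

end IzerginK

section Determinant

theorem det_cauchy_option {K α : Type*} [Field K] [Fintype α] [DecidableEq α] {c : K}
    (y : Option α → K) (hy : ∀ j k, y j - y k + c ≠ 0) :
    (Matrix.of fun j k => c / (y j - y k + c)).det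
      = (∏ j, (y (some j) - y none) / (y (some j) - y none + c)) *
        (∏ k, (y none - y (some k)) / (y none - y (some k) + c)) *
        (Matrix.of fun j k => c / (y (some j) - y (some k) + c)).det := by
  have hc : c ≠ 0 := by simpa using hy none none
  let P : α → K := fun j => (y (some j) - y none) / (y (some j) - y none + c)
  let Q : α → K := fun k => (y none - y (some k)) / (y none - y (some k) + c)
  let e : Unit ⊕ α ≃ Option α := (Equiv.sumComm _ _).trans (Equiv.optionEquivSumPUnit α).symm
  have blocks : (Matrix.of fun j k => c / (y j - y k + c)).submatrix e e
      = Matrix.fromBlocks (1 : Matrix Unit Unit K)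
          (Matrix.of fun _ k => c / (y none - y (some k) + c))
          (Matrix.of fun j _ => c / (y (some j) - y none + c))
          (Matrix.of fun j k => c / (y (some j) - y (some k) + c)) := by
    ext (i | i) (j | j) <;> simp [e, hc]
  have schur_complement : (Matrix.of fun j k => c / (y (some j) - y (some k) + c)) -
      (Matrix.of fun (j : α) (_ : Unit) => c / (y (some j) - y none + c)) *
        (Matrix.of fun (_ : Unit) k => c / (y none - y (some k) + c))
      = Matrix.diagonal P * (Matrix.of fun j k => c / (y (some j) - y (some k) + c)) *
        Matrix.diagonal Q := by
    ext j k
    rw [Matrix.mul_diagonal, Matrix.diagonal_mul]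
    simp only [Matrix.sub_apply, Matrix.mul_apply, Matrix.of_apply, Finset.univ_unique,
      Finset.sum_singleton, P, Q]
    have h₁ := hy (some j) (some k)
    have h₂ := hy (some j) none
    have h₃ := hy none (some k)
    field_simp
    ring
  rw [← Matrix.det_submatrix_equiv_self e, blocks, Matrix.det_fromBlocks_one₁₁,
    schur_complement, Matrix.det_mul, Matrix.det_mul, Matrix.det_diagonal, Matrix.det_diagonal]
  ring

theorem det_cauchy_submatrix {K κ : Type*} [Field K] [DecidableEq κ] {c : K}
    {y : κ → K} (hy : ∀ j k, y j - y k + c ≠ 0) (S : Finset κ) :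
    (Matrix.of fun j k : S => c / (y j - y k + c)).det
      = ∏ j ∈ S, ∏ k ∈ S.erase j, (y j - y k) / (y j - y k + c) := by
  induction S using Finset.induction_on with
  | empty => simp
  | insert a S ha ih =>
    let e := Finset.subtypeInsertEquivOption ha
    let y' : Option S → K := fun o => y (e.symm o)
    have erase_insert : ∀ j ∈ S, ∏ k ∈ (insert a S).erase j, (y j - y k) / (y j - y k + c)
        = (y j - y a) / (y j - y a + c) * ∏ k ∈ S.erase j, (y j - y k) / (y j - y k + c) := by
      intro j hj
      have haj : a ≠ j := fun h => ha (h ▸ hj)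
      rw [Finset.erase_insert_of_ne haj, Finset.prod_insert (by simp [ha])]
    rw [← Matrix.det_submatrix_equiv_self e.symm]
    refine (det_cauchy_option y' fun j k => hy _ _).trans ?_
    rw [Finset.prod_insert ha, Finset.erase_insert ha, Finset.prod_congr rfl erase_insert,
      Finset.prod_mul_distrib, ← ih, ← Finset.prod_coe_sort S, ← Finset.prod_coe_sort S,
      ← mul_assoc, mul_comm (∏ k : S, (y a - y k) / _)]
    rfl

theorem det_smul_one_add_diagonal_mul {R κ : Type*} [CommRing R] [Fintype κ] [DecidableEq κ]
    (a : R) (d : κ → R) (M : Matrix κ κ R) :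
    (a • (1 : Matrix κ κ R) + Matrix.diagonal d * M).det
      = ∑ S : Finset κ, a ^ Sᶜ.card * (∏ j ∈ S, d j) *
          (M.submatrix (Subtype.val : S → κ) Subtype.val).det := by
  have rows : a • (1 : Matrix κ κ R) + Matrix.diagonal d * M
      = (fun j => d j • M.row j) + fun j => a • (1 : Matrix κ κ R).row j := by
    ext j k
    rw [Matrix.add_apply, Matrix.diagonal_mul, add_comm]
    rfl
  have scale : ∀ S : Finset κ,
      (S.piecewise (fun j => d j • M.row j) fun j => a • (1 : Matrix κ κ R).row j)
        = fun j => S.piecewise d (fun _ => a) j • S.piecewise M.row (1 : Matrix κ κ R).row j := by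
    intro S
    ext j k
    by_cases hj : j ∈ S <;> simp [hj]
  rw [rows]
  change Matrix.detRowAlternating _ = _
  rw [AlternatingMap.map_add_univ]
  refine Finset.sum_congr rfl fun S _ => ?_
  rw [scale, AlternatingMap.map_smul_univ, Finset.prod_piecewise, Finset.univ_inter,
    ← Finset.compl_eq_univ_sdiff, Finset.prod_const, mul_comm (∏ j ∈ S, d j), smul_eq_mul,
    ← Matrix.det_piecewise_one_eq_submatrix_det]
  rfl

variable {ι κ : Type*} [Fintype ι] {c : ℂ}

theorem KIz_eq_izerginSum [Fintype κ] [DecidableEq κ] (z : ℂ) (x : ι → ℂ) {y : κ → ℂ}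
    (hy : y.Injective) (hyc : ∀ j k, y j - y k + c ≠ 0) :
    KIz c z x y = izerginSum c z y (fun a => ∏ i, fC c (x i) (y a)) Finset.univ := by
  let d (j : κ) : ℂ := (∏ i, fC c (x i) (y j)) * ∏ k ∈ Finset.univ.erase j, fC c (y j) (y k)
  have KIz_matrix : KIz c z x y = ((-z) • (1 : Matrix κ κ ℂ) +
      Matrix.diagonal d * Matrix.of fun j k => c / (y j - y k + c)).det := by
    unfold KIz
    congr 1
    ext j k
    simp only [Matrix.of_apply, Matrix.add_apply, Matrix.smul_apply, Matrix.one_apply,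
      Matrix.diagonal_mul, smul_eq_mul, hC, div_div_eq_mul_div, mul_div_assoc, d]
  have minor : ∀ S : Finset κ, ((Matrix.of fun j k => c / (y j - y k + c)).submatrix
      (Subtype.val : S → κ) Subtype.val).det = ∏ j ∈ S, ∏ k ∈ S.erase j, (fC c (y j) (y k))⁻¹ := by
    intro S
    simp only [fC, inv_div]
    exact det_cauchy_submatrix hyc S
  have cancel : ∀ S : Finset κ, ∀ j ∈ S, (∏ k ∈ Finset.univ.erase j, fC c (y j) (y k)) *
      ∏ k ∈ S.erase j, (fC c (y j) (y k))⁻¹ = ∏ k ∈ Sᶜ, fC c (y j) (y k) := by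
    intro S j hj
    have fC_ne_zero : ∏ k ∈ S.erase j, fC c (y j) (y k) ≠ 0 := Finset.prod_ne_zero_iff.mpr
      fun k hk => div_ne_zero (hyc j k)
        (sub_ne_zero.mpr (hy.ne (Finset.ne_of_mem_erase hk).symm))
    rw [← Finset.prod_sdiff (Finset.erase_subset_erase j (Finset.subset_univ S)),
      erase_sdiff_erase_of_mem hj, ← Finset.compl_eq_univ_sdiff, Finset.prod_inv_distrib,
      mul_inv_cancel_right₀ fC_ne_zero]
  rw [KIz_matrix, det_smul_one_add_diagonal_mul, izerginSum, Finset.powerset_univ]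
  refine Finset.sum_congr rfl fun S _ => ?_
  rw [minor, Finset.prod_mul_distrib, ← Finset.compl_eq_univ_sdiff, prodF,
    ← Finset.prod_congr rfl (cancel S), Finset.prod_mul_distrib]
  ring

theorem KIz_add_const [Fintype κ] [DecidableEq κ] (z : ℂ) (x : ι → ℂ) (y : κ → ℂ) (d : ℂ) :
    KIz c z x (fun k => y k + d) = KIz c z (fun i => x i - d) y := by
  simp only [KIz, fC, hC, sub_add_eq_sub_sub_swap, add_sub_cancel_right]

theorem KIz_restr {p : ℕ} (x : ι → ℂ) {w : Fin p → ℂ} (hw : w.Injective)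
    (hwc : ∀ i j, w i - w j + c ≠ 0) (s : Finset (Fin p)) (d : ℂ) :
    KIz c 1 x (fun i => restr w s i + d) = izerginK c (fun i => x i - d) w Finset.univ s := by
  have hy : (restr w s).Injective := hw.comp Subtype.val_injective
  rw [KIz_add_const, KIz_eq_izerginSum 1 _ hy fun _ _ => hwc _ _, izerginK]
  conv_rhs => rw [← Finset.attach_map_val (s := s), izerginSum_map]
  rfl

end Determinant

section BetheVectors

/-- The part of genericity that the algebra needs: the parameters are pairwise distinct and no two
of them differ by `±c`. The case `i = j` of the second clause says `c ≠ 0`. -/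
structure WeaklyGeneric {ι : Type*} (c : ℂ) (w : ι → ℂ) : Prop where
  injective : w.Injective
  sub_add_ne_zero : ∀ i j, w i - w j + c ≠ 0

lemma WeaklyGeneric.ne_zero {ι : Type*} {c : ℂ} {w : ι → ℂ} (hw : WeaklyGeneric c w) (i : ι) :
    c ≠ 0 := by
  simpa using hw.sub_add_ne_zero i i

lemma WeaklyGeneric.neg {ι : Type*} {c : ℂ} {w : ι → ℂ} (hw : WeaklyGeneric c w) :
    WeaklyGeneric (-c) w :=
  ⟨hw.injective, fun i j h => hw.sub_add_ne_zero j i (by linear_combination -h)⟩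

variable {ι V : Type*} [AddCommGroup V] [Module ℂ V]

/-- The exchange relation that commutes an operator `X(w_t)` to the right of a creation operator
`B(w_a)`. -/
def ExchangeRel (c : ℂ) (w : ι → ℂ) (X B : ι → Module.End ℂ V) : Prop :=
  ∀ ⦃t a⦄, t ≠ a →
    X t * B a = fC c (w a) (w t) • (B a * X t) + gC c (w t) (w a) • (B t * X a)

variable [DecidableEq ι]

/-- The vectors `b S` are obtained from `b ∅` by applying the creation operators `B a` with
`a ∈ S`, in any order. -/
def IsBetheFamily (B : ι → Module.End ℂ V) (b : Finset ι → V) : Prop :=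
  ∀ ⦃a S⦄, a ∉ S → b (insert a S) = B a (b S)

variable {c : ℂ} {w lam : ι → ℂ} {X B : ι → Module.End ℂ V} {b : Finset ι → V}

theorem ExchangeRel.apply_bethe (hX : ExchangeRel c w X B) (hb : IsBetheFamily B b)
    (hw : w.Injective) (hvac : ∀ t, X t (b ∅) = lam t • b ∅) {t : ι} {S : Finset ι} (ht : t ∉ S) :
    X t (b S) = (lam t * prodF c w S {t}) • b S + ∑ a ∈ S,
      (lam a * gC c (w t) (w a) * prodF c w (S.erase a) {a}) • b (insert t (S.erase a)) := by
  induction S using Finset.induction_on generalizing t with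
  | empty => simp [hvac]
  | insert r S hr ih =>
    obtain ⟨htr, htS⟩ : t ≠ r ∧ t ∉ S := by simpa using ht
    have swapped : ∀ a ∈ S, b (insert t ((insert r S).erase a)) = B r (b (insert t (S.erase a))) ∧
        b (insert t ((insert r S).erase a)) = B t (b (insert r (S.erase a))) := by
      intro a ha
      have hra : r ≠ a := fun h => hr (h ▸ ha)
      rw [Finset.erase_insert_of_ne hra]
      refine ⟨?_, hb (by simp [htr, htS])⟩
      rw [Finset.insert_comm, hb (by simp [htr.symm, hr])]
    have exchange : X t (b (insert r S))
        = fC c (w r) (w t) • B r (X t (b S)) + gC c (w t) (w r) • B t (X r (b S)) := by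
      rw [hb hr]
      exact LinearMap.congr_fun (hX htr) (b S)
    rw [exchange, ih htS, ih hr, Finset.sum_insert hr, Finset.erase_insert hr, hb hr, hb htS,
      prodF_insert_left c w hr, prodF_singleton_left, Finset.prod_singleton]
    have summand : ∀ a ∈ S, (lam a * gC c (w t) (w a) * prodF c w ((insert r S).erase a) {a}) •
          b (insert t ((insert r S).erase a))
        = fC c (w r) (w t) • (lam a * gC c (w t) (w a) * prodF c w (S.erase a) {a}) •
            B r (b (insert t (S.erase a)))
          + gC c (w t) (w r) • (lam a * gC c (w r) (w a) * prodF c w (S.erase a) {a}) •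
            B t (b (insert r (S.erase a))) := by
      intro a ha
      have hta : t ≠ a := fun h => htS (h ▸ ha)
      rw [mul_assoc, gC_mul_prodF_insert_erase c hw htr hta hr ha, ← (swapped a ha).1,
        ← (swapped a ha).2]
      module
    rw [Finset.sum_congr rfl summand]
    simp only [map_add, map_sum, map_smul, smul_add, Finset.smul_sum, Finset.sum_add_distrib]
    module

theorem ExchangeRel.apply_bethe_erase (hX : ExchangeRel c w X B) (hb : IsBetheFamily B b)
    (hw : WeaklyGeneric c w) (hvac : ∀ t, X t (b ∅) = lam t • b ∅) {t : ι} {R : Finset ι}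
    (ht : t ∈ R) :
    X t (b (R.erase t)) = ∑ a ∈ R,
      (lam a * (hC c (w t) (w a))⁻¹ * prodF c w (R.erase a) {a}) • b (R.erase a) := by
  rw [hX.apply_bethe hb hw.injective hvac (Finset.notMem_erase t R), ← Finset.add_sum_erase R _ ht,
    hC_self (hw.ne_zero t), inv_one, mul_one]
  refine congrArg _ (Finset.sum_congr rfl fun a ha => ?_)
  have hat : a ≠ t := Finset.ne_of_mem_erase ha
  have htRa : t ∈ R.erase a := Finset.mem_erase.mpr ⟨hat.symm, ht⟩
  rw [Finset.erase_right_comm, Finset.insert_erase htRa,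
    ← prodF_singleton_mul_erase_left c w htRa, prodF_singleton_left, Finset.prod_singleton,
    ← inv_hC_mul_fC (hw.sub_add_ne_zero t a)]
  congr 1
  ring

variable (c w lam) (b) in
/-- The `ε`-coefficient of the Bethe vector built from the creation operators `B + ε D` over the
dual numbers, where `D` has eigenvalues `lam` on the vacuum; see `betheDeriv_insert`. -/
def betheDeriv (S : Finset ι) : V :=
  ∑ a ∈ S, (lam a * prodF c w {a} (S.erase a)) • b (S.erase a)

theorem betheDeriv_insert {D : ι → Module.End ℂ V} (hD : ExchangeRel (-c) w D B)
    (hb : IsBetheFamily B b) (hw : w.Injective) (hvac : ∀ t, D t (b ∅) = lam t • b ∅) {r : ι}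
    {S : Finset ι} (hr : r ∉ S) :
    betheDeriv c w lam b (insert r S) = B r (betheDeriv c w lam b S) + D r (b S) := by
  have summand : ∀ a ∈ S, (lam a * prodF c w {a} ((insert r S).erase a)) •
        b ((insert r S).erase a)
      = (lam a * prodF c w {a} (S.erase a)) • B r (b (S.erase a))
        + (lam a * gC c (w a) (w r) * prodF c w {a} (S.erase a)) • b (insert r (S.erase a)) := by
    intro a ha
    have hra : r ≠ a := fun h => hr (h ▸ ha)
    have hr' : r ∉ S.erase a := by simp [hr]
    rw [Finset.erase_insert_of_ne hra, prodF_insert_right c w hr', prodF_singleton_left,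
      Finset.prod_singleton, fC_eq_one_add_gC c (hw.ne hra.symm), ← hb hr']
    module
  rw [betheDeriv, Finset.sum_insert hr, Finset.erase_insert hr, Finset.sum_congr rfl summand,
    hD.apply_bethe hb hw hvac hr, betheDeriv]
  simp only [map_sum, map_smul, Finset.sum_add_distrib, gC_neg, prodF_neg]
  abel

/-- The operator `P + ε Q` over the dual numbers, acting on `V ⊕ ε V`. -/
def dualNumberEnd (P Q : Module.End ℂ V) : Module.End ℂ (V × V) :=
  (P ∘ₗ LinearMap.fst ℂ V V).prod (P ∘ₗ LinearMap.snd ℂ V V + Q ∘ₗ LinearMap.fst ℂ V V)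

variable (c w) in
/-- The entries `A`, `B`, `C`, `D` of a monodromy matrix evaluated at the parameters `w`, acting on
a highest weight vector `b ∅` of weights `lam1`, `lam2`, together with its Bethe vectors `b S`. -/
structure IsHighestWeight (A B C D : ι → Module.End ℂ V) (lam1 lam2 : ι → ℂ)
    (b : Finset ι → V) : Prop where
  bethe : IsBetheFamily B b
  exchange_A : ExchangeRel c w A B
  exchange_D : ExchangeRel (-c) w D B
  exchange_C : ∀ ⦃t a⦄, t ≠ a → C t * B a + A t * D a
    = fC c (w a) (w t) • (B a * C t + D a * A t) + gC c (w t) (w a) • (B t * C a + D t * A a)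
  vac_A : ∀ t, A t (b ∅) = lam1 t • b ∅
  vac_D : ∀ t, D t (b ∅) = lam2 t • b ∅
  vac_C : ∀ t, C t (b ∅) = 0

variable (c w) in
/-- The coefficient of the Bethe vector `b W` in the action of `C(w_t)` on a Bethe vector, where
`w_a` and `w_e` are the parameters absorbed by `D` and by `A`; see `IsHighestWeight.C_bethe`. -/
def annihilationCoeff (lam1 lam2 : ι → ℂ) (t a e : ι) (W : Finset ι) : ℂ :=
  lam2 a * lam1 e * fC c (w a) (w e) * (hC c (w a) (w t))⁻¹ * (hC c (w t) (w e))⁻¹ *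
    prodF c w {a} W * prodF c w W {e}

namespace IsHighestWeight

variable {A B C D : ι → Module.End ℂ V} {lam1 lam2 : ι → ℂ}

theorem A_betheDeriv_add_C_bethe (h : IsHighestWeight c w A B C D lam1 lam2 b)
    (hw : WeaklyGeneric c w) {t : ι} {R : Finset ι} (ht : t ∈ R) :
    A t (betheDeriv c w lam2 b (R.erase t)) + C t (b (R.erase t)) = ∑ e ∈ R,
      (lam1 e * (hC c (w t) (w e))⁻¹ * prodF c w (R.erase e) {e}) •
        betheDeriv c w lam2 b (R.erase e) := by
  let b' (S : Finset ι) : V × V := (b S, betheDeriv c w lam2 b S)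
  have hb' : IsBetheFamily (fun a => dualNumberEnd (B a) (D a)) b' := fun a S ha =>
    Prod.ext (h.bethe ha) (betheDeriv_insert h.exchange_D h.bethe hw.injective h.vac_D ha)
  have hA' : ExchangeRel c w (fun t => dualNumberEnd (A t) (C t))
      (fun a => dualNumberEnd (B a) (D a)) := by
    refine fun t a hta => LinearMap.ext fun x =>
      Prod.ext (LinearMap.congr_fun (h.exchange_A hta) x.1) ?_
    have exchange_A : A t (B a x.2)
        = fC c (w a) (w t) • B a (A t x.2) + gC c (w t) (w a) • B t (A a x.2) :=
      LinearMap.congr_fun (h.exchange_A hta) x.2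
    have exchange_C : C t (B a x.1) + A t (D a x.1)
        = fC c (w a) (w t) • (B a (C t x.1) + D a (A t x.1))
          + gC c (w t) (w a) • (B t (C a x.1) + D t (A a x.1)) :=
      LinearMap.congr_fun (h.exchange_C hta) x.1
    change A t (B a x.2 + D a x.1) + C t (B a x.1)
      = fC c (w a) (w t) • (B a (A t x.2 + C t x.1) + D a (A t x.1))
        + gC c (w t) (w a) • (B t (A a x.2 + C a x.1) + D t (A a x.1))
    simp only [map_add]
    linear_combination (norm := module) exchange_A + exchange_C
  have hvac' : ∀ t, dualNumberEnd (A t) (C t) (b' ∅) = lam1 t • b' ∅ := fun t => by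
    simp [b', dualNumberEnd, betheDeriv, h.vac_A, h.vac_C]
  simpa [b', dualNumberEnd, Prod.snd_sum] using
    congrArg Prod.snd (hA'.apply_bethe_erase hb' hw hvac' ht)

theorem A_betheDeriv (h : IsHighestWeight c w A B C D lam1 lam2 b)
    (hw : WeaklyGeneric c w) {t : ι} {R : Finset ι} (ht : t ∈ R) :
    A t (betheDeriv c w lam2 b (R.erase t)) = ∑ a ∈ R, ∑ e ∈ R.erase a,
      (lam2 a * prodF c w {a} (R.erase a) * (1 - (hC c (w a) (w t))⁻¹) *
        (lam1 e * (hC c (w t) (w e))⁻¹ * prodF c w ((R.erase a).erase e) {e})) •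
        b ((R.erase a).erase e) := by
  have peel : ∀ a ∈ R, (lam2 a * prodF c w {a} (R.erase a) * (1 - (hC c (w a) (w t))⁻¹)) •
        A t (b ((R.erase a).erase t))
      = ∑ e ∈ R.erase a,
        (lam2 a * prodF c w {a} (R.erase a) * (1 - (hC c (w a) (w t))⁻¹) *
          (lam1 e * (hC c (w t) (w e))⁻¹ * prodF c w ((R.erase a).erase e) {e})) •
          b ((R.erase a).erase e) := by
    intro a _
    rcases eq_or_ne a t with rfl | hat
    · simp [hC_self (hw.ne_zero a)]
    · rw [h.exchange_A.apply_bethe_erase h.bethe hw h.vac_A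
        (Finset.mem_erase.mpr ⟨hat.symm, ht⟩), Finset.smul_sum]
      simp only [smul_smul]
  rw [← Finset.sum_congr rfl peel, ← Finset.add_sum_erase R _ ht]
  rw [hC_self (hw.ne_zero t), inv_one, sub_self, mul_zero, zero_smul, zero_add, betheDeriv]
  simp only [map_sum, map_smul]
  refine Finset.sum_congr rfl fun a ha => ?_
  have hat : a ≠ t := Finset.ne_of_mem_erase ha
  have htRa : t ∈ R.erase a := Finset.mem_erase.mpr ⟨hat.symm, ht⟩
  rw [Finset.erase_right_comm, ← prodF_singleton_mul_erase_right c w htRa,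
    prodF_singleton_left c w a {t}, Finset.prod_singleton]
  congr 1
  linear_combination (-lam2 a * prodF c w {a} ((R.erase a).erase t)) *
    fC_mul_one_sub_inv_hC (hw.injective.ne hat) (hw.sub_add_ne_zero a t)

theorem C_bethe (h : IsHighestWeight c w A B C D lam1 lam2 b)
    (hw : WeaklyGeneric c w) {t : ι} {R : Finset ι} (ht : t ∈ R) :
    C t (b (R.erase t)) = ∑ a ∈ R, ∑ e ∈ R.erase a,
      annihilationCoeff c w lam1 lam2 t a e ((R.erase a).erase e) • b ((R.erase a).erase e) := by
  have expand : ∑ e ∈ R, (lam1 e * (hC c (w t) (w e))⁻¹ * prodF c w (R.erase e) {e}) •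
        betheDeriv c w lam2 b (R.erase e)
      = ∑ a ∈ R, ∑ e ∈ R.erase a,
        (lam1 e * (hC c (w t) (w e))⁻¹ * prodF c w (R.erase e) {e} *
          (lam2 a * prodF c w {a} ((R.erase e).erase a))) • b ((R.erase e).erase a) := by
    simp only [betheDeriv, Finset.smul_sum, smul_smul]
    exact Finset.sum_comm' fun e a => by simp only [Finset.mem_erase]; tauto
  rw [eq_sub_of_add_eq' (h.A_betheDeriv_add_C_bethe hw ht), h.A_betheDeriv hw ht, expand]
  simp only [← Finset.sum_sub_distrib]
  refine Finset.sum_congr rfl fun a ha => Finset.sum_congr rfl fun e he => ?_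
  have hae : a ∈ R.erase e := by grind
  rw [← prodF_singleton_mul_erase_left c w hae {e}, ← prodF_singleton_mul_erase_right c w he {a},
    prodF_singleton_left c w a {e}, Finset.prod_singleton, Finset.erase_right_comm (a := e),
    annihilationCoeff]
  module

end IsHighestWeight

end BetheVectors

section KorepinSum

variable {ι : Type*} (c : ℂ) (w : ι → ℂ)

lemma prod_fC_sub_eq_zero {T : Finset ι} {a : ι} (ha : a ∈ T) :
    ∏ i ∈ T, fC c (w i - c) (w a) = 0 :=
  Finset.prod_eq_zero ha (by simp [fC])

variable [DecidableEq ι]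

lemma prod_fC_sub_mul_prodF_union {c : ℂ} {w : ι → ℂ} (hw : WeaklyGeneric c w) {T W : Finset ι}
    {a : ι} (ha : a ∉ T) (hTW : Disjoint T W) :
    (∏ i ∈ T, fC c (w i - c) (w a)) * prodF c w {a} (T ∪ W) = prodF c w {a} W := by
  have cancel : ∀ i ∈ T, fC c (w i - c) (w a) * fC c (w a) (w i) = 1 := fun i hi =>
    fC_sub_mul_fC (hw.injective.ne (ne_of_mem_of_not_mem hi ha)) (hw.sub_add_ne_zero a i)
  rw [prodF_singleton_left, prodF_singleton_left, Finset.prod_union hTW, ← mul_assoc,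
    ← Finset.prod_mul_distrib, Finset.prod_congr rfl cancel, Finset.prod_const_one, one_mul]

/-- The Izergin determinant `K(w̄_T | w̄_Y + c)`, the shift being moved to the first argument. -/
def shiftedIzergin (T Y : Finset ι) : ℂ :=
  izerginK c (fun i => w i - c) w T Y

/-- The contribution of the partition of a tuple into `w̄_I` and `w̄_J` to `korepinSum`. -/
def korepinTerm (lam1 lam2 : ι → ℂ) (T I J : Finset ι) : ℂ :=
  (∏ i ∈ I, lam2 i) * (∏ i ∈ J, lam1 i) * prodF c w I J *
    shiftedIzergin c w T I * shiftedIzergin (-c) w T J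

/-- The Izergin-Korepin sum over the partitions of `w̄_X` into two parts, the first of size
`#T`. -/
def korepinSum (lam1 lam2 : ι → ℂ) (T X : Finset ι) : ℂ :=
  ∑ I ∈ X.powersetCard T.card, korepinTerm c w lam1 lam2 T I (X \ I)

variable {c w} {lam1 lam2 : ι → ℂ}

theorem shiftedIzergin_insert (hw : WeaklyGeneric c w) {T Y : Finset ι} {t : ι} (ht : t ∉ T)
    (hcard : Y.card = T.card + 1) :
    shiftedIzergin c w (insert t T) Y = -∑ a ∈ Y, (hC c (w a) (w t))⁻¹ *
      (∏ i ∈ T, fC c (w i - c) (w a)) * prodF c w {a} (Y.erase a) *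
        shiftedIzergin c w T (Y.erase a) := by
  have no_pole : ∀ i ∈ insert t T, ∀ a ∈ Y, w i - c ≠ w a := fun i _ a _ h =>
    hw.sub_add_ne_zero a i (by linear_combination -h)
  rw [shiftedIzergin, izerginK_insert c hw.injective ht no_pole hcard]
  simp only [gC_sub_self_left, neg_mul, Finset.sum_neg_distrib, shiftedIzergin]

theorem shiftedIzergin_neg_insert (hw : WeaklyGeneric c w) {T Y : Finset ι} {t : ι} (ht : t ∉ T)
    (hcard : Y.card = T.card + 1) :
    shiftedIzergin (-c) w (insert t T) Y = -∑ e ∈ Y, (hC c (w t) (w e))⁻¹ *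
      (∏ i ∈ T, fC (-c) (w i - -c) (w e)) * prodF c w (Y.erase e) {e} *
        shiftedIzergin (-c) w T (Y.erase e) := by
  simpa only [hC_neg, prodF_neg] using shiftedIzergin_insert hw.neg ht hcard

theorem korepinTerm_insert (hw : WeaklyGeneric c w) {T I J : Finset ι} {t : ι} (ht : t ∉ T)
    (hIJ : Disjoint I J) (hI : I.card = T.card + 1) (hJ : J.card = T.card + 1) :
    korepinTerm c w lam1 lam2 (insert t T) I J = ∑ a ∈ I, ∑ e ∈ J,
      (∏ i ∈ T, fC c (w i - c) (w a)) * (∏ i ∈ T, fC (-c) (w i - -c) (w e)) *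
        annihilationCoeff c w lam1 lam2 t a e (I.erase a ∪ J.erase e) *
        korepinTerm c w lam1 lam2 T (I.erase a) (J.erase e) := by
  rw [korepinTerm, shiftedIzergin_insert hw ht hI, shiftedIzergin_neg_insert hw ht hJ, mul_assoc,
    neg_mul_neg, Finset.sum_mul_sum, Finset.mul_sum]
  refine Finset.sum_congr rfl fun a ha => ?_
  rw [Finset.mul_sum]
  refine Finset.sum_congr rfl fun e he => ?_
  rw [korepinTerm, annihilationCoeff, ← Finset.mul_prod_erase I lam2 ha,
    ← Finset.mul_prod_erase J lam1 he]
  linear_combination (lam2 a * (∏ i ∈ I.erase a, lam2 i) * (lam1 e * ∏ i ∈ J.erase e, lam1 i) *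
    ((hC c (w a) (w t))⁻¹ * (∏ i ∈ T, fC c (w i - c) (w a)) * shiftedIzergin c w T (I.erase a)) *
    ((hC c (w t) (w e))⁻¹ * (∏ i ∈ T, fC (-c) (w i - -c) (w e)) *
      shiftedIzergin (-c) w T (J.erase e))) *
    prodF_mul_prodF_erase_mul_prodF_erase c w hIJ ha he

theorem korepinSum_insert (hw : WeaklyGeneric c w) {T X : Finset ι} {t : ι} (ht : t ∉ T)
    (hcard : X.card = 2 * T.card + 2) :
    korepinSum c w lam1 lam2 (insert t T) X = ∑ a ∈ X, ∑ e ∈ X.erase a,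
      (∏ i ∈ T, fC c (w i - c) (w a)) * (∏ i ∈ T, fC (-c) (w i - -c) (w e)) *
        annihilationCoeff c w lam1 lam2 t a e ((X.erase a).erase e) *
        korepinSum c w lam1 lam2 T ((X.erase a).erase e) := by
  let term (a e : ι) (S : Finset ι) : ℂ :=
    (∏ i ∈ T, fC c (w i - c) (w a)) * (∏ i ∈ T, fC (-c) (w i - -c) (w e)) *
      annihilationCoeff c w lam1 lam2 t a e ((X.erase a).erase e) *
      korepinTerm c w lam1 lam2 T S (((X.erase a).erase e) \ S)
  have expand : ∀ I ∈ X.powersetCard (T.card + 1), korepinTerm c w lam1 lam2 (insert t T) I (X \ I)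
      = ∑ a ∈ I, ∑ e ∈ X.erase a \ I.erase a, term a e (I.erase a) := by
    intro I hI
    obtain ⟨hIX, hIcard⟩ := Finset.mem_powersetCard.mp hI
    rw [korepinTerm_insert hw ht Finset.disjoint_sdiff hIcard
      (by rw [Finset.card_sdiff_of_subset hIX]; lia)]
    refine Finset.sum_congr rfl fun a ha => ?_
    rw [erase_sdiff_erase_of_mem ha]
    refine Finset.sum_congr rfl fun e he => ?_
    have hcompl : (X.erase a).erase e \ I.erase a = (X \ I).erase e := by grind
    have hunion : (X.erase a).erase e = I.erase a ∪ (X \ I).erase e := by grind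
    simp only [term, hcompl, ← hunion]
  rw [korepinSum, Finset.card_insert_of_notMem ht, Finset.sum_congr rfl expand,
    sum_powersetCard_sum_mem X T.card fun a S => ∑ e ∈ X.erase a \ S, term a e S]
  refine Finset.sum_congr rfl fun a _ => ?_
  rw [sum_powersetCard_sum_notMem]
  simp only [term, ← Finset.mul_sum, korepinSum]

theorem korepinSum_insert_union (hw : WeaklyGeneric c w) {T R : Finset ι} {t : ι} (ht : t ∉ T)
    (hTR : Disjoint T R) (hcard : R.card = T.card + 2) :
    korepinSum c w lam1 lam2 (insert t T) (T ∪ R) = ∑ a ∈ R, ∑ e ∈ R.erase a,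
      annihilationCoeff c w lam1 lam2 t a e ((R.erase a).erase e) *
        korepinSum c w lam1 lam2 T (T ∪ (R.erase a).erase e) := by
  rw [korepinSum_insert hw ht (by rw [Finset.card_union_of_disjoint hTR]; lia)]
  symm
  refine Finset.sum_subset_zero_on_sdiff Finset.subset_union_right (fun a ha => ?_) fun a haR => ?_
  · have haT : a ∈ T := by grind
    simp only [prod_fC_sub_eq_zero c w haT, zero_mul, Finset.sum_const_zero]
  have haT : a ∉ T := Finset.disjoint_right.mp hTR haR
  refine Finset.sum_subset_zero_on_sdiff (by grind) (fun e he => ?_) fun e he => ?_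
  · have heT : e ∈ T := by grind
    simp only [prod_fC_sub_eq_zero (-c) w heT, mul_zero, zero_mul]
  have heT : e ∉ T := Finset.disjoint_right.mp hTR (Finset.mem_of_mem_erase he)
  have hTW : Disjoint T ((R.erase a).erase e) := hTR.mono_right (by grind)
  have hV : ((T ∪ R).erase a).erase e = T ∪ (R.erase a).erase e := by grind
  have absorb_e := prod_fC_sub_mul_prodF_union hw.neg heT hTW
  rw [prodF_neg, prodF_neg] at absorb_e
  rw [hV, annihilationCoeff, annihilationCoeff, ← prod_fC_sub_mul_prodF_union hw haT hTW,
    ← absorb_e]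
  ring

end KorepinSum

section Pairing

variable {ι V : Type*} [DecidableEq ι] [AddCommGroup V] [Module ℂ V]
  {c : ℂ} {w lam1 lam2 : ι → ℂ} {A B C D : ι → Module.End ℂ V} {b : Finset ι → V}

/-- The functionals `ω T` are obtained from `ω ∅` by applying the operators `N t` with `t ∈ T` on
the right, in any order. -/
def IsDualBetheFamily (N : ι → Module.End ℂ V) (ω : Finset ι → V →ₗ[ℂ] ℂ) : Prop :=
  ∀ ⦃t T⦄, t ∉ T → ω (insert t T) = ω T ∘ₗ N t

variable {ω : Finset ι → V →ₗ[ℂ] ℂ} {α β γ : ℂ}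

theorem IsDualBetheFamily.insert_apply_bethe
    (hω : IsDualBetheFamily (fun t => C t + α • A t + β • D t + γ • B t) ω)
    (h : IsHighestWeight c w A B C D lam1 lam2 b) (hw : WeaklyGeneric c w) {T R : Finset ι}
    {t : ι} (ht : t ∉ T) (htR : t ∈ R) (hTR : Disjoint T R) (hcard : T.card + 1 < R.card)
    (hvanish : ∀ S, Disjoint T S → T.card < S.card → ω T (b S) = 0) :
    ω (insert t T) (b (R.erase t)) = ∑ a ∈ R, ∑ e ∈ R.erase a,
      annihilationCoeff c w lam1 lam2 t a e ((R.erase a).erase e) *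
        ω T (b ((R.erase a).erase e)) := by
  have hvanish_erase : ∀ a ∈ R, ω T (b (R.erase a)) = 0 := fun a ha =>
    hvanish _ (hTR.mono_right (Finset.erase_subset a R)) (by rw [Finset.card_erase_of_mem ha]; lia)
  have hA : ω T (A t (b (R.erase t))) = 0 := by
    rw [h.exchange_A.apply_bethe_erase h.bethe hw h.vac_A htR, map_sum]
    exact Finset.sum_eq_zero fun a ha => by rw [map_smul, hvanish_erase a ha, smul_zero]
  have hD : ω T (D t (b (R.erase t))) = 0 := by
    rw [h.exchange_D.apply_bethe_erase h.bethe hw.neg h.vac_D htR, map_sum]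
    exact Finset.sum_eq_zero fun a ha => by rw [map_smul, hvanish_erase a ha, smul_zero]
  have hB : ω T (B t (b (R.erase t))) = 0 := by
    rw [← h.bethe (Finset.notMem_erase t R), Finset.insert_erase htR]
    exact hvanish R hTR (by lia)
  rw [hω ht]
  simp [hA, hD, hB, h.C_bethe hw htR]

theorem IsDualBetheFamily.apply_bethe_eq_zero
    (hω : IsDualBetheFamily (fun t => C t + α • A t + β • D t + γ • B t) ω)
    (h : IsHighestWeight c w A B C D lam1 lam2 b) (hw : WeaklyGeneric c w)
    (hω0 : ∀ S : Finset ι, S.Nonempty → ω ∅ (b S) = 0) {T S : Finset ι} (hTS : Disjoint T S)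
    (hcard : T.card < S.card) : ω T (b S) = 0 := by
  induction T using Finset.induction_on generalizing S with
  | empty => exact hω0 S (Finset.card_pos.mp hcard)
  | insert t T ht ih =>
    rw [Finset.card_insert_of_notMem ht] at hcard
    obtain ⟨htS, hTS⟩ := Finset.disjoint_insert_left.mp hTS
    have hTR : Disjoint T (insert t S) := Finset.disjoint_insert_right.mpr ⟨ht, hTS⟩
    rw [← Finset.erase_insert htS, hω.insert_apply_bethe h hw ht (Finset.mem_insert_self t S) hTR
      (by rw [Finset.card_insert_of_notMem htS]; lia) fun _ => ih]
    refine Finset.sum_eq_zero fun a ha => Finset.sum_eq_zero fun e he => ?_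
    rw [ih (hTR.mono_right (by grind)), mul_zero]
    rw [Finset.card_erase_of_mem he, Finset.card_erase_of_mem ha,
      Finset.card_insert_of_notMem htS]
    lia

theorem IsDualBetheFamily.apply_bethe_eq_korepinSum
    (hω : IsDualBetheFamily (fun t => C t + α • A t + β • D t + γ • B t) ω)
    (h : IsHighestWeight c w A B C D lam1 lam2 b) (hw : WeaklyGeneric c w)
    (hω0 : ∀ S : Finset ι, S.Nonempty → ω ∅ (b S) = 0) (hω1 : ω ∅ (b ∅) = 1)
    {T S : Finset ι} (hTS : Disjoint T S) (hcard : T.card = S.card) :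
    ω T (b S) = korepinSum c w lam1 lam2 T (T ∪ S) := by
  induction T using Finset.induction_on generalizing S with
  | empty =>
    obtain rfl : S = ∅ := Finset.card_eq_zero.mp hcard.symm
    simp [hω1, korepinSum, korepinTerm, shiftedIzergin]
  | insert t T ht ih =>
    rw [Finset.card_insert_of_notMem ht] at hcard
    obtain ⟨htS, hTS⟩ := Finset.disjoint_insert_left.mp hTS
    have hTR : Disjoint T (insert t S) := Finset.disjoint_insert_right.mpr ⟨ht, hTS⟩
    have hRcard : (insert t S).card = T.card + 2 := by
      rw [Finset.card_insert_of_notMem htS]; lia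
    rw [Finset.insert_union, ← Finset.union_insert, korepinSum_insert_union hw ht hTR hRcard]
    nth_rw 1 [← Finset.erase_insert htS]
    rw [hω.insert_apply_bethe h hw ht (Finset.mem_insert_self t S) hTR (by lia)
      fun _ => hω.apply_bethe_eq_zero h hw hω0]
    refine Finset.sum_congr rfl fun a ha => Finset.sum_congr rfl fun e he => ?_
    rw [ih (hTR.mono_right (by grind))]
    rw [Finset.card_erase_of_mem he, Finset.card_erase_of_mem ha]
    lia

end Pairing

section Yangian

/-- The commutation relations `[T_ij(x), T_kl(y)] = g(x,y) (T_kj(y) T_il(x) - T_kj(x) T_il(y))` of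
the entries of a monodromy matrix. -/
def IsYangian {κ 𝒜 : Type*} [Ring 𝒜] [Algebra ℂ 𝒜] (c : ℂ) (T : κ → κ → ℂ → 𝒜) : Prop :=
  ∀ i j k l x y, x ≠ y →
    T i j x * T k l y - T k l y * T i j x
      = gC c x y • (T k j y * T i l x - T k j x * T i l y)

section Algebra

variable {κ 𝒜 : Type*} [Fintype κ] [Ring 𝒜] [Algebra ℂ 𝒜] {c : ℂ}

theorem IsYangian.matrix_mul {T : κ → κ → ℂ → 𝒜} (hT : IsYangian c T) (L : Matrix κ κ ℂ) :
    IsYangian c fun i j x => ∑ p, L i p • T p j x := by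
  intro i j k l x y hxy
  have expand : ∀ (i j k l : κ) (x y : ℂ),
      (∑ p, L i p • T p j x) * ∑ r, L k r • T r l y
        = ∑ p, ∑ r, (L i p * L k r) • (T p j x * T r l y) := by
    simp only [Finset.sum_mul_sum, smul_mul_smul_comm, implies_true]
  rw [expand i j k l, expand k l i j, expand k j i l, expand k j i l, Finset.sum_comm,
    ← Finset.sum_sub_distrib, ← Finset.sum_sub_distrib, Finset.smul_sum]
  refine Finset.sum_congr rfl fun r _ => ?_
  rw [← Finset.sum_sub_distrib, ← Finset.sum_sub_distrib, Finset.smul_sum]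
  refine Finset.sum_congr rfl fun p _ => ?_
  rw [mul_comm (L i p), ← smul_sub, ← smul_sub, hT p j r l x y hxy, smul_comm]

theorem IsYangian.mul_matrix {T : κ → κ → ℂ → 𝒜} (hT : IsYangian c T) (R : Matrix κ κ ℂ) :
    IsYangian c fun i j x => ∑ q, R q j • T i q x := by
  intro i j k l x y hxy
  have expand : ∀ (i j k l : κ) (x y : ℂ),
      (∑ q, R q j • T i q x) * ∑ s, R s l • T k s y
        = ∑ q, ∑ s, (R q j * R s l) • (T i q x * T k s y) := by
    simp only [Finset.sum_mul_sum, smul_mul_smul_comm, implies_true]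
  rw [expand i j k l, expand k l i j, expand k j i l, expand k j i l,
    Finset.sum_comm (f := fun s q => (R s l * R q j) • _),
    ← Finset.sum_sub_distrib, ← Finset.sum_sub_distrib, Finset.smul_sum]
  refine Finset.sum_congr rfl fun q _ => ?_
  rw [← Finset.sum_sub_distrib, ← Finset.sum_sub_distrib, Finset.smul_sum]
  refine Finset.sum_congr rfl fun s _ => ?_
  rw [mul_comm (R s l), ← smul_sub, ← smul_sub, hT i q k s x y hxy, smul_comm]

/-- The gauge transformed monodromy matrix `L T R` with `L = !![1, 0; -β1, 1]` and
`R = !![1, 0; -β2, 1]`, for which the modified vacuum is a highest weight vector. -/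
def gaugeTransform (β1 β2 : ℂ) (T : Fin 2 → Fin 2 → ℂ → 𝒜) : Fin 2 → Fin 2 → ℂ → 𝒜 :=
  fun i j x => ∑ q, !![1, 0; -β2, 1] q j • ∑ p, !![1, 0; -β1, 1] i p • T p q x

theorem IsYangian.gaugeTransform {T : Fin 2 → Fin 2 → ℂ → 𝒜} (hT : IsYangian c T) (β1 β2 : ℂ) :
    IsYangian c (gaugeTransform β1 β2 T) :=
  (hT.matrix_mul _).mul_matrix _

variable (β1 β2 : ℂ) (T : Fin 2 → Fin 2 → ℂ → 𝒜) (x : ℂ)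

lemma gaugeTransform_zero_zero : gaugeTransform β1 β2 T 0 0 x = T 0 0 x - β2 • T 0 1 x := by
  simp [gaugeTransform, Fin.sum_univ_two, sub_eq_add_neg]

lemma gaugeTransform_zero_one : gaugeTransform β1 β2 T 0 1 x = T 0 1 x := by
  simp [gaugeTransform, Fin.sum_univ_two]

lemma gaugeTransform_one_one : gaugeTransform β1 β2 T 1 1 x = T 1 1 x - β1 • T 0 1 x := by
  simpa [gaugeTransform, Fin.sum_univ_two] using neg_add_eq_sub _ _

lemma gaugeTransform_one_zero : gaugeTransform β1 β2 T 1 0 x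
    = T 1 0 x - β1 • T 0 0 x - β2 • T 1 1 x + (β1 * β2) • T 0 1 x := by
  simp only [gaugeTransform, Fin.sum_univ_two, Matrix.of_apply, Matrix.cons_val_zero,
    Matrix.cons_val_one, Matrix.cons_val_fin_one, Matrix.cons_val']
  module

end Algebra

variable {V : Type*} [AddCommGroup V] [Module ℂ V] {c : ℂ}

theorem IsYangian.isHighestWeight {ι : Type*} [DecidableEq ι]
    {T : Fin 2 → Fin 2 → ℂ → Module.End ℂ V} (hT : IsYangian c T) {w : ι → ℂ}
    (hw : w.Injective) {lam1 lam2 : ℂ → ℂ} {b : Finset ι → V}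
    (hb : IsBetheFamily (fun a => T 0 1 (w a)) b) (vac_A : ∀ x, T 0 0 x (b ∅) = lam1 x • b ∅)
    (vac_D : ∀ x, T 1 1 x (b ∅) = lam2 x • b ∅) (vac_C : ∀ x, T 1 0 x (b ∅) = 0) :
    IsHighestWeight c w (fun t => T 0 0 (w t)) (fun t => T 0 1 (w t)) (fun t => T 1 0 (w t))
      (fun t => T 1 1 (w t)) (lam1 ∘ w) (lam2 ∘ w) b where
  bethe := hb
  exchange_A t a hta := by
    have commutator := hT 0 1 0 0 (w a) (w t) (hw.ne hta.symm)
    rw [fC_eq_one_add_gC c (hw.ne hta.symm), gC_swap c (w t)]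
    linear_combination (norm := module) -commutator
  exchange_D t a hta := by
    have commutator := hT 1 1 0 1 (w t) (w a) (hw.ne hta)
    rw [fC_neg, gC_neg, fC_eq_one_add_gC c (hw.ne hta), gC_swap c (w a)]
    linear_combination (norm := module) commutator
  exchange_C t a hta := by
    have commutator_DA := hT 1 1 0 0 (w a) (w t) (hw.ne hta.symm)
    have commutator_BC := hT 0 1 1 0 (w a) (w t) (hw.ne hta.symm)
    rw [fC_eq_one_add_gC c (hw.ne hta.symm), gC_swap c (w t)]
    linear_combination (norm := module) -commutator_DA - commutator_BC
  vac_A t := vac_A (w t)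
  vac_D t := vac_D (w t)
  vac_C t := vac_C (w t)

end Yangian

section OpProd

variable {V : Type*} [AddCommGroup V] [Module ℂ V] {op : ℂ → Module.End ℂ V} {p : ℕ}
  {w : Fin p → ℂ}

@[simp]
lemma opProd_empty : opProd op w ∅ = 1 := by
  simp [opProd]

lemma opProd_eq_noncommProd (s : Finset (Fin p))
    (hop : (s : Set (Fin p)).Pairwise (Function.onFun Commute fun i => op (w i))) :
    opProd op w s = s.noncommProd (fun i => op (w i)) hop := by
  rw [opProd, ← Finset.noncommProd_toFinset _ _ (by simpa using hop) (s.sort_nodup _)]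
  simp only [Finset.sort_toFinset]

lemma opProd_insert (hop : ∀ x y, Commute (op x) (op y)) {a : Fin p} {s : Finset (Fin p)}
    (ha : a ∉ s) : opProd op w (insert a s) = op (w a) * opProd op w s := by
  have pairwise : Pairwise (Function.onFun Commute fun i => op (w i)) := fun _ _ _ => hop _ _
  rw [opProd_eq_noncommProd _ (pairwise.set_pairwise _),
    Finset.noncommProd_insert_of_notMem _ _ _ _ ha, ← opProd_eq_noncommProd]

lemma opProd_insert' (hop : ∀ x y, Commute (op x) (op y)) {a : Fin p} {s : Finset (Fin p)}
    (ha : a ∉ s) : opProd op w (insert a s) = opProd op w s * op (w a) := by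
  have pairwise : Pairwise (Function.onFun Commute fun i => op (w i)) := fun _ _ _ => hop _ _
  rw [opProd_eq_noncommProd _ (pairwise.set_pairwise _),
    Finset.noncommProd_insert_of_notMem' _ _ _ _ ha, ← opProd_eq_noncommProd]

lemma opProd_map (hop : ∀ x y, Commute (op x) (op y)) {q : ℕ} (e : Fin q ↪ Fin p)
    (s : Finset (Fin q)) : opProd op w (s.map e) = opProd op (w ∘ e) s := by
  induction s using Finset.induction_on with
  | empty => simp
  | insert a s ha ih =>
    rw [Finset.map_insert, opProd_insert hop (by simpa using ha), opProd_insert hop ha, ih,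
      Function.comp_apply]

lemma opProd_eq_opProd_univ (hop : ∀ x y, Commute (op x) (op y)) (s : Finset (Fin p)) :
    opProd op w s = opProd op (w ∘ s.orderEmbOfFin rfl) Finset.univ := by
  conv_lhs => rw [← s.map_orderEmbOfFin_univ rfl]
  exact opProd_map hop _ _

theorem isDualBetheFamily_opProd {T : Fin 2 → Fin 2 → ℂ → Module.End ℂ V}
    (hcomm : ∀ x y, Commute (T 1 0 x) (T 1 0 y)) (ω : V →ₗ[ℂ] ℂ) (w : Fin p → ℂ) (β1 β2 : ℂ) :
    let T' := gaugeTransform β1 β2 T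
    IsDualBetheFamily (fun t => T' 1 0 (w t) + β1 • T' 0 0 (w t) + β2 • T' 1 1 (w t) +
      (β1 * β2) • T' 0 1 (w t)) fun S => ω ∘ₗ opProd (T 1 0) w S := by
  intro T' t S ht
  have recover : T' 1 0 (w t) + β1 • T' 0 0 (w t) + β2 • T' 1 1 (w t) + (β1 * β2) • T' 0 1 (w t)
      = T 1 0 (w t) := by
    simp only [T', gaugeTransform_zero_zero, gaugeTransform_zero_one, gaugeTransform_one_zero,
      gaugeTransform_one_one]
    module
  ext x
  simp only [recover, opProd_insert' hcomm ht, LinearMap.comp_apply, Module.End.mul_apply]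

theorem isHighestWeight_gaugeTransform {T : Fin 2 → Fin 2 → ℂ → Module.End ℂ V}
    {c β1 β2 : ℂ} (hT : IsYangian c T) (hcomm : ∀ x y, Commute (T 0 1 x) (T 0 1 y)) {vac : V}
    {lam1 lam2 : ℂ → ℂ} (hvac11 : ∀ x, T 0 0 x vac = lam1 x • vac + β2 • T 0 1 x vac)
    (hvac22 : ∀ x, T 1 1 x vac = lam2 x • vac + β1 • T 0 1 x vac)
    (hvac21 : ∀ x, T 1 0 x vac
      = (β1 * lam1 x + β2 * lam2 x) • vac + (β1 * β2) • T 0 1 x vac)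
    (hw : w.Injective) :
    let T' := gaugeTransform β1 β2 T
    IsHighestWeight c w (fun t => T' 0 0 (w t)) (fun t => T' 0 1 (w t)) (fun t => T' 1 0 (w t))
      (fun t => T' 1 1 (w t)) (lam1 ∘ w) (lam2 ∘ w) fun S => opProd (T 0 1) w S vac := by
  refine (hT.gaugeTransform β1 β2).isHighestWeight hw ?_ (fun x => ?_) (fun x => ?_) fun x => ?_
  · intro a S ha
    simp only [opProd_insert hcomm ha, gaugeTransform_zero_one, Module.End.mul_apply]
  · simp [gaugeTransform_zero_zero, hvac11]
  · simp [gaugeTransform_one_one, hvac22]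
  · simp only [gaugeTransform_one_zero, opProd_empty, Module.End.one_apply, LinearMap.add_apply,
      LinearMap.sub_apply, LinearMap.smul_apply, hvac11, hvac22, hvac21]
    module

end OpProd

section GenericTuples

variable {ι κ : Type*} {c : ℂ} {w : ι → ℂ}

lemma Generic.comp_s8 (hw : Generic c w) {e : κ → ι} (he : e.Injective) : Generic c (w ∘ e) :=
  fun i j hij => hw (e i) (e j) (he.ne hij)

lemma Generic.weaklyGeneric (hw : Generic c w) (hc : c ≠ 0) : WeaklyGeneric c w where
  injective i j hij := by
    by_contra h
    exact (hw i j h).1 (sub_eq_zero.mpr hij)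
  sub_add_ne_zero i j := by
    rcases eq_or_ne i j with rfl | hij
    · simpa using hc
    · exact fun h => (hw i j hij).2.2.1 (eq_neg_of_add_eq_zero_left h)

variable {n : ℕ}

lemma shiftedIzergin_map_castAdd (c : ℂ) (u v : Fin n → ℂ) (Y : Finset (Fin (n + n))) :
    shiftedIzergin c (Fin.append u v) (Finset.univ.map (Fin.castAddEmb n)) Y
      = izerginK c (fun i => u i - c) (Fin.append u v) Finset.univ Y := by
  simp [shiftedIzergin, izerginK]

theorem korepinSum_append {u v : Fin n → ℂ} (hw : WeaklyGeneric c (Fin.append u v))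
    (lam1 lam2 : Fin (n + n) → ℂ) :
    korepinSum c (Fin.append u v) lam1 lam2 (Finset.univ.map (Fin.castAddEmb n)) Finset.univ
      = ∑ s ∈ Finset.powersetCard n Finset.univ, (∏ i ∈ s, lam2 i) * (∏ i ∈ sᶜ, lam1 i) *
          fSS c (Fin.append u v) s sᶜ *
          KIz c 1 u (fun i => restr (Fin.append u v) s i + c) *
          KIzBar c 1 u (fun i => restr (Fin.append u v) sᶜ i - c) := by
  simp only [korepinSum, korepinTerm, Finset.card_map, Finset.card_fin,
    ← Finset.compl_eq_univ_sdiff, shiftedIzergin_map_castAdd, KIzBar, sub_eq_add_neg _ c,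
    KIz_restr u hw.injective hw.sub_add_ne_zero,
    KIz_restr u hw.injective hw.neg.sub_add_ne_zero]
  rfl

lemma disjoint_map_castAddEmb_map_natAddEmb (m n : ℕ) :
    Disjoint (Finset.univ.map (Fin.castAddEmb n))
      (Finset.univ.map (Fin.natAddEmb m) : Finset (Fin (m + n))) := by
  simp only [Finset.disjoint_left, Finset.mem_map, Finset.mem_univ, true_and]
  rintro _ ⟨i, rfl⟩ ⟨j, hij⟩
  have := congrArg Fin.val hij
  simp only [Fin.natAddEmb_apply, Fin.val_natAdd, Fin.castAddEmb_apply, Fin.val_castAdd] at this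
  lia

lemma map_castAddEmb_union_map_natAddEmb (m n : ℕ) :
    Finset.univ.map (Fin.castAddEmb n) ∪ Finset.univ.map (Fin.natAddEmb m)
      = (Finset.univ : Finset (Fin (m + n))) :=
  Finset.eq_univ_of_forall fun i => by
    induction i using Fin.addCases <;> simp

end GenericTuples

/-- For `μ = 1` and `m = n` the modified scalar product reduces to the ordinary
Izergin--Korepin scalar product. -/
theorem stmt8
    (c : ℂ) (hc : c ≠ 0) (β1 β2 μ : ℂ) (hβ1 : β1 ≠ 0) (hβ2 : β2 ≠ 0)
    (hμ : μ = 1)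
    (V : Type*) [AddCommGroup V] [Module ℂ V]
    (N : Fin 2 → Fin 2 → ℂ → Module.End ℂ V)
    (vac : V) (lam1 lam2 : ℂ → ℂ) (vacDual : V →ₗ[ℂ] ℂ)
    (hYang : ∀ (i j k l : Fin 2) (x y : ℂ), x ≠ y →
      N i j x * N k l y - N k l y * N i j x
        = gC c x y • (N k j y * N i l x - N k j x * N i l y))
    (hCommSame : ∀ (i j : Fin 2) (x y : ℂ), N i j x * N i j y = N i j y * N i j x)
    (hvac11 : ∀ x : ℂ, N 0 0 x vac = lam1 x • vac + β2 • (N 0 1 x vac))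
    (hvac22 : ∀ x : ℂ, N 1 1 x vac = lam2 x • vac + β1 • (N 0 1 x vac))
    (hvac21 : ∀ x : ℂ, N 1 0 x vac
      = (β1 * lam1 x + β2 * lam2 x) • vac + (β1 * β2) • (N 0 1 x vac))
    (hnorm : vacDual vac = 1)
    (hAvg : ∀ (p : ℕ) (w : Fin p → ℂ), Generic c w →
      vacDual (opProd (N 0 1) w Finset.univ vac)
        = (1 - μ) ^ p * ∑ s : Finset (Fin p),
            (-β1) ^ (-(s.card : ℤ)) * (-β2) ^ (-(sᶜ.card : ℤ)) *
              (∏ i ∈ s, lam2 (w i)) * (∏ i ∈ sᶜ, lam1 (w i)) * fSS c w s sᶜ)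
    (n : ℕ) (u v : Fin n → ℂ)
    (hgen : Generic c (Fin.append u v)) :
    vacDual ((opProd (N 1 0) u Finset.univ * opProd (N 0 1) v Finset.univ) vac)
      = ∑ s ∈ Finset.powersetCard n (Finset.univ : Finset (Fin (n + n))),
          (∏ i ∈ s, lam2 (Fin.append u v i)) *
            (∏ i ∈ sᶜ, lam1 (Fin.append u v i)) *
            fSS c (Fin.append u v) s sᶜ *
            KIz c 1 u (fun i => restr (Fin.append u v) s i + c) *
            KIzBar c 1 u (fun i => restr (Fin.append u v) sᶜ i - c) := by
  have hw : WeaklyGeneric c (Fin.append u v) := hgen.weaklyGeneric hc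
  have highest_weight := isHighestWeight_gaugeTransform hYang (hCommSame 0 1)
    hvac11 hvac22 hvac21 hw.injective
  have dual_family := isDualBetheFamily_opProd (hCommSame 1 0) vacDual (Fin.append u v) β1 β2
  have vacuum_average (S : Finset (Fin (n + n))) (hS : S.Nonempty) :
      vacDual (opProd (N 0 1) (Fin.append u v) S vac) = 0 := by
    rw [opProd_eq_opProd_univ (hCommSame 0 1), hAvg _ _ (hgen.comp_s8 (S.orderEmbOfFin rfl).injective),
      hμ, sub_self, zero_pow hS.card_pos.ne', zero_mul]
  have pairing := dual_family.apply_bethe_eq_korepinSum highest_weight hw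
    (by simpa using vacuum_average) (by simpa using hnorm)
    (disjoint_map_castAddEmb_map_natAddEmb n n) (by simp)
  rw [map_castAddEmb_union_map_natAddEmb, korepinSum_append hw] at pairing
  have append_castAdd : Fin.append u v ∘ Fin.castAddEmb n = u := funext (Fin.append_left u v)
  have append_natAdd : Fin.append u v ∘ Fin.natAddEmb n = v := funext (Fin.append_right u v)
  simpa only [LinearMap.comp_apply, Module.End.mul_apply, Function.comp_apply,
    opProd_map (hCommSame _ _), append_castAdd, append_natAdd] using pairing
end
end

section
/- If n < m, then for all generic tuples ū of length n and v̄ of length m one has K^{(1)}_{n,m}(ū | v̄) = 0 and \bar{K}^{(1)}_{n,m}(ū | v̄) = 0. -/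
open scoped BigOperators

noncomputable section

/-!
`K^{(z)}(x̄|ȳ)` is the characteristic determinant `det (A - z)` of the matrix with entries
`A j k = f(x̄, y_j) f(y_j, ȳ_j) / h(y_j, y_k)`, so it suffices to exhibit an eigenvector of `A` with
eigenvalue `1`. With `N(t) = ∏ i, (t - x_i - c)` and `ω_k` the Lagrange weights of the nodes `ȳ`,
the vector `ω_k N(y_k)` works: when `x̄` is shorter than `ȳ`, the barycentric interpolation
formula recovers `N(y_j + c)` from the values `N(y_k)`, and `f(x̄, y_j) N(y_j + c) = N(y_j)`.
-/

namespace Generic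

variable {c : ℂ} {ι : Type*} {w : ι → ℂ}

theorem injective_s9 (hw : Generic c w) : Function.Injective w := fun i j hij =>
  by_contra fun hne => (hw i j hne).1 (sub_eq_zero.2 hij)

theorem sub_ne (hw : Generic c w) (hc : c ≠ 0) (i j : ι) : w i - w j ≠ c := by
  rcases eq_or_ne i j with rfl | hij
  · rw [sub_self]
    exact hc.symm
  · exact (hw i j hij).2.1

end Generic

section Interpolation

open Lagrange Polynomial

theorem degree_nodal_univ_lt_card {R ι κ : Type*} [CommRing R] [Nontrivial R] [Fintype ι]
    [Fintype κ] (hcard : Fintype.card ι < Fintype.card κ) (x : ι → R) :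
    (nodal Finset.univ x).degree < (Finset.univ : Finset κ).card := by
  rw [degree_nodal, Finset.card_univ, Finset.card_univ]
  exact_mod_cast hcard

variable {F ι : Type*} [Field F] [DecidableEq ι] {s : Finset ι} {v : ι → F} {P : F[X]}

theorem eval_eq_eval_nodal_mul_sum (hv : Set.InjOn v s) (hP : P.degree < s.card) {t : F}
    (ht : ∀ i ∈ s, t ≠ v i) :
    P.eval t = (nodal s v).eval t * ∑ i ∈ s, nodalWeight s v i * (t - v i)⁻¹ * P.eval (v i) := by
  conv_lhs => rw [eq_interpolate hv hP]
  exact eval_interpolate_not_at_node _ ht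

theorem exists_nodalWeight_mul_eval_ne_zero (hv : Set.InjOn v s) (hP : P.degree < s.card)
    (hP₀ : P ≠ 0) : ∃ i ∈ s, nodalWeight s v i * P.eval (v i) ≠ 0 := by
  contrapose! hP₀
  exact eq_zero_of_degree_lt_of_eval_index_eq_zero _ hv hP fun i hi =>
    (mul_eq_zero.1 (hP₀ i hi)).resolve_left (nodalWeight_ne_zero hv hi)

end Interpolation

section Products

open Lagrange

variable {ι : Type*} {s : Finset ι}

theorem prod_fC_mul_eval_nodal (c : ℂ) {x : ι → ℂ} {t : ℂ} (hx : ∀ i ∈ s, x i ≠ t) :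
    (∏ i ∈ s, fC c (x i) t) * (nodal s fun i => x i + c).eval (t + c) =
      (nodal s fun i => x i + c).eval t := by
  rw [eval_nodal, eval_nodal, ← Finset.prod_mul_distrib]
  refine Finset.prod_congr rfl fun i hi => ?_
  have hxt : x i - t ≠ 0 := sub_ne_zero.2 (hx i hi)
  rw [fC]
  field_simp
  ring

theorem mul_prod_erase_fC [DecidableEq ι] (c : ℂ) (y : ι → ℂ) {j : ι} (hj : j ∈ s) :
    c * ∏ i ∈ s.erase j, fC c (y j) (y i) = nodalWeight s y j * (nodal s y).eval (y j + c) := by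
  have hprod : ∏ i ∈ s.erase j, fC c (y j) (y i) =
      nodalWeight s y j * ∏ i ∈ s.erase j, (y j + c - y i) := by
    rw [nodalWeight, ← Finset.prod_mul_distrib]
    refine Finset.prod_congr rfl fun i _ => ?_
    rw [fC, div_eq_inv_mul, sub_add_eq_add_sub]
  rw [hprod, eval_nodal, ← Finset.mul_prod_erase s _ hj, add_sub_cancel_left, mul_left_comm]

end Products

section IzerginMatrix

open Lagrange Matrix

variable {ι κ : Type*} [Fintype ι] [Fintype κ] [DecidableEq κ]

/-- The matrix `f(x̄, y_j) f(y_j, ȳ_j) / h(y_j, y_k)` whose characteristic determinant in `z` is the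
modified Izergin determinant `K^{(z)}(x̄|ȳ)`. -/
def izerginMatrix (c : ℂ) (x : ι → ℂ) (y : κ → ℂ) : Matrix κ κ ℂ :=
  of fun j k =>
    (∏ i, fC c (x i) (y j)) * (∏ i ∈ Finset.univ.erase j, fC c (y j) (y i)) / hC c (y j) (y k)

/-- The candidate eigenvector of `izerginMatrix c x y` for the eigenvalue `1`: the values
at the nodes `ȳ` of the polynomial with roots `x_i + c`, scaled by the Lagrange weights of `ȳ`. -/
def izerginVector (c : ℂ) (x : ι → ℂ) (y : κ → ℂ) : κ → ℂ :=
  fun k => nodalWeight Finset.univ y k * (nodal Finset.univ fun i => x i + c).eval (y k)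

theorem KIz_eq_det_izerginMatrix_sub (c z : ℂ) (x : ι → ℂ) (y : κ → ℂ) :
    KIz c z x y = (izerginMatrix c x y - z • 1).det := by
  rw [KIz]
  congr 1
  ext j k
  simp only [izerginMatrix, of_apply, Matrix.sub_apply, Matrix.smul_apply, one_apply, smul_eq_mul]
  ring

theorem KIz_eq_zero_of_mulVec_eq_smul {c z : ℂ} {x : ι → ℂ} {y w : κ → ℂ} (hw : w ≠ 0)
    (h : izerginMatrix c x y *ᵥ w = z • w) : KIz c z x y = 0 := by
  rw [KIz_eq_det_izerginMatrix_sub, ← exists_mulVec_eq_zero_iff]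
  exact ⟨w, hw, by rw [sub_mulVec, smul_mulVec, one_mulVec, h, sub_self]⟩

theorem izerginMatrix_mulVec_apply (c : ℂ) (x : ι → ℂ) (y w : κ → ℂ) (j : κ) :
    (izerginMatrix c x y *ᵥ w) j =
      (∏ i, fC c (x i) (y j)) * (c * ∏ i ∈ Finset.univ.erase j, fC c (y j) (y i)) *
        ∑ k, (y j + c - y k)⁻¹ * w k := by
  simp only [mulVec, dotProduct, izerginMatrix, of_apply, Finset.mul_sum]
  refine Finset.sum_congr rfl fun k _ => ?_
  rw [hC, div_div_eq_mul_div, div_eq_mul_inv, sub_add_eq_add_sub]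
  ring

variable {c : ℂ} {x : ι → ℂ} {y : κ → ℂ}

theorem izerginVector_ne_zero (hcard : Fintype.card ι < Fintype.card κ)
    (hy : Function.Injective y) : izerginVector c x y ≠ 0 := by
  obtain ⟨k, -, hk⟩ := exists_nodalWeight_mul_eval_ne_zero hy.injOn
    (degree_nodal_univ_lt_card hcard fun i => x i + c) nodal_ne_zero
  exact Function.ne_iff.2 ⟨k, hk⟩

theorem izerginMatrix_mulVec_izerginVector (hcard : Fintype.card ι < Fintype.card κ)
    (hxy : ∀ i j, x i ≠ y j) (hy : Function.Injective y) (hyc : ∀ j k, y j - y k ≠ c) :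
    izerginMatrix c x y *ᵥ izerginVector c x y = izerginVector c x y := by
  ext j
  set N := nodal Finset.univ fun i => x i + c
  have hnode : ∀ k ∈ Finset.univ, y j + c ≠ y k := fun k _ h =>
    hyc k j (by rw [← h, add_sub_cancel_left])
  have hN : (nodal Finset.univ y).eval (y j + c) *
      ∑ k, (y j + c - y k)⁻¹ * izerginVector c x y k = N.eval (y j + c) := by
    rw [eval_eq_eval_nodal_mul_sum hy.injOn (degree_nodal_univ_lt_card hcard _) hnode]
    simp only [izerginVector, mul_assoc, mul_left_comm]
  calc (izerginMatrix c x y *ᵥ izerginVector c x y) j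
    _ = (∏ i, fC c (x i) (y j)) *
          (nodalWeight Finset.univ y j * (nodal Finset.univ y).eval (y j + c)) *
            ∑ k, (y j + c - y k)⁻¹ * izerginVector c x y k := by
      rw [izerginMatrix_mulVec_apply, mul_prod_erase_fC c y (Finset.mem_univ j)]
    _ = nodalWeight Finset.univ y j * ((∏ i, fC c (x i) (y j)) * N.eval (y j + c)) := by
      rw [← hN]
      ring
    _ = izerginVector c x y j := by
      rw [prod_fC_mul_eval_nodal c fun i _ => hxy i j, izerginVector]

theorem KIz_one_eq_zero (hcard : Fintype.card ι < Fintype.card κ)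
    (hxy : ∀ i j, x i ≠ y j) (hy : Function.Injective y) (hyc : ∀ j k, y j - y k ≠ c) :
    KIz c 1 x y = 0 :=
  KIz_eq_zero_of_mulVec_eq_smul (izerginVector_ne_zero hcard hy) <| by
    rw [izerginMatrix_mulVec_izerginVector hcard hxy hy hyc, one_smul]

theorem stmt9_general (hcard : Fintype.card ι < Fintype.card κ)
    (hxy : ∀ i j, x i ≠ y j) (hy : Function.Injective y) (hyc : ∀ j k, y j - y k ≠ c) :
    KIz c 1 x y = 0 ∧ KIzBar c 1 x y = 0 :=
  ⟨KIz_one_eq_zero hcard hxy hy hyc, KIz_one_eq_zero hcard hxy hy fun j k h =>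
    hyc k j (by rw [← neg_sub, h, neg_neg])⟩

end IzerginMatrix

/-- `K^{(1)}_{n,m}(ū|v̄) = 0` and `K̄^{(1)}_{n,m}(ū|v̄) = 0` whenever `n < m`. -/
theorem stmt9
    (c : ℂ) (hc : c ≠ 0) (n m : ℕ) (hnm : n < m)
    (u : Fin n → ℂ) (v : Fin m → ℂ)
    (hgen : Generic c (Fin.append u v)) :
    KIz c 1 u v = 0 ∧ KIzBar c 1 u v = 0 := by
  obtain ⟨-, hv, huv⟩ := Fin.append_injective_iff.1 hgen.injective_s9
  exact stmt9_general (by simpa only [Fintype.card_fin] using hnm) huv hv fun j k => by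
    simpa only [Fin.append_right] using hgen.sub_ne hc (Fin.natAdd n j) (Fin.natAdd n k)
end
end
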